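/- arXiv:1510.02421 — 9 statements merged into one kernel-verified Lean document; each statement's English description precedes it below -/
import Mathlib

section
/- Let G be a finite simple graph and let n ≥ 4. Then the zero forcing number of the tensor product of G with the complete graph K_n satisfies Z(G × K_n) ≤ (n−2)·|V(G)| + 2·Z⁻(G), where Z⁻(G) is the skew zero forcing number of G. -/
namespace PaperPD

open SimpleGraph

variable {V α β : Type*}

/-- Vertices that eventually become blue in the standard zero forcing process
starting from the blue set `B`. -/
inductive ZFClosure (G : SimpleGraph V) (B : Set V) : V → Prop
  | init (v : V) (hv : v ∈ B) : ZFClosure G B v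
  | force (u w : V) (hu : ZFClosure G B u) (huw : G.Adj u w)
      (h : ∀ x, G.Adj u x → x ≠ w → ZFClosure G B x) : ZFClosure G B w

/-- `B` is a zero forcing set of `G`. -/
def IsZeroForcingSet (G : SimpleGraph V) (B : Set V) : Prop :=
  ∀ v, ZFClosure G B v

/-- The zero forcing number `Z(G)`. -/
noncomputable def zeroForcingNumber (G : SimpleGraph V) [Fintype V] : ℕ :=
  sInf {k | ∃ B : Finset V, B.card = k ∧ IsZeroForcingSet G ↑B}

/-- Vertices that eventually become blue in the skew zero forcing process
starting from the blue set `B` (the forcing vertex need not be blue). -/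
inductive SkewZFClosure (G : SimpleGraph V) (B : Set V) : V → Prop
  | init (v : V) (hv : v ∈ B) : SkewZFClosure G B v
  | force (u w : V) (huw : G.Adj u w)
      (h : ∀ x, G.Adj u x → x ≠ w → SkewZFClosure G B x) : SkewZFClosure G B w

/-- `B` is a skew zero forcing set of `G`. -/
def IsSkewZeroForcingSet (G : SimpleGraph V) (B : Set V) : Prop :=
  ∀ v, SkewZFClosure G B v

/-- The skew zero forcing number `Z⁻(G)`. -/
noncomputable def skewZeroForcingNumber (G : SimpleGraph V) [Fintype V] : ℕ :=
  sInf {k | ∃ B : Finset V, B.card = k ∧ IsSkewZeroForcingSet G ↑B}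

/-- The closed neighborhood `N[S]` of a set of vertices. -/
def closedNbhd (G : SimpleGraph V) (S : Set V) : Set V :=
  S ∪ {v | ∃ u ∈ S, G.Adj u v}

/-- `S` is a power dominating set of `G`, i.e. `N[S]` is a zero forcing set. -/
def IsPowerDominatingSet (G : SimpleGraph V) (S : Set V) : Prop :=
  IsZeroForcingSet G (closedNbhd G S)

/-- The power domination number `γ_P(G)`. -/
noncomputable def powerDominationNumber (G : SimpleGraph V) [Fintype V] : ℕ :=
  sInf {k | ∃ S : Finset V, S.card = k ∧ IsPowerDominatingSet G ↑S}

/-- `S` is a dominating set of `G` (`N[S] = V`). -/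
def IsDominatingSet (G : SimpleGraph V) (S : Set V) : Prop :=
  ∀ v, v ∈ closedNbhd G S

/-- The domination number `γ(G)`. -/
noncomputable def dominationNumber (G : SimpleGraph V) [Fintype V] : ℕ :=
  sInf {k | ∃ S : Finset V, S.card = k ∧ IsDominatingSet G ↑S}

/-- `S` is a total dominating set of `G` (`N(S) = V`). -/
def IsTotalDominatingSet (G : SimpleGraph V) (S : Set V) : Prop :=
  ∀ v, ∃ u ∈ S, G.Adj u v

/-- The total domination number `γ_t(G)`. -/
noncomputable def totalDominationNumber (G : SimpleGraph V) [Fintype V] : ℕ :=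
  sInf {k | ∃ S : Finset V, S.card = k ∧ IsTotalDominatingSet G ↑S}

/-- The degree of a vertex. -/
noncomputable def deg (G : SimpleGraph V) (v : V) : ℕ :=
  (G.neighborSet v).ncard

/-- The maximum degree `Δ(G)`. -/
noncomputable def maxDeg (G : SimpleGraph V) [Fintype V] : ℕ :=
  Finset.univ.sup fun v => deg G v

/-- `A` is a symmetric real matrix whose off-diagonal nonzero pattern is
described by the graph `G`, i.e. `A ∈ S(G)`. -/
def MatrixOfGraph (G : SimpleGraph V) (A : Matrix V V ℝ) : Prop :=
  A.IsSymm ∧ ∀ i j, i ≠ j → (A i j ≠ 0 ↔ G.Adj i j)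

/-- The nullity of a square real matrix. -/
noncomputable def nullity [Fintype V] [DecidableEq V] (A : Matrix V V ℝ) : ℕ :=
  Fintype.card V - A.rank

/-- The maximum nullity `M(G)`. -/
noncomputable def maxNullity (G : SimpleGraph V) [Fintype V] [DecidableEq V] : ℕ :=
  sSup {k | ∃ A : Matrix V V ℝ, MatrixOfGraph G A ∧ nullity A = k}

/-- The tensor (direct) product of two simple graphs. -/
def tensorProd (G : SimpleGraph α) (H : SimpleGraph β) : SimpleGraph (α × β) where
  Adj p q := G.Adj p.1 q.1 ∧ H.Adj p.2 q.2
  symm := ⟨fun _ _ h => ⟨h.1.symm, h.2.symm⟩⟩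
  loopless := ⟨fun p h => G.loopless.irrefl p.1 h.1⟩

/-- The lexicographic product of two simple graphs. -/
def lexProd (G : SimpleGraph α) (H : SimpleGraph β) : SimpleGraph (α × β) where
  Adj p q := G.Adj p.1 q.1 ∨ (p.1 = q.1 ∧ H.Adj p.2 q.2)
  symm := ⟨fun _ _ h => h.elim (fun h' => Or.inl h'.symm) (fun h' => Or.inr ⟨h'.1.symm, h'.2.symm⟩)⟩
  loopless := ⟨fun p h => h.elim (fun h' => G.loopless.irrefl p.1 h') (fun h' => H.loopless.irrefl p.2 h'.2)⟩



/-- The initially white indices for colour `b`. -/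
def wht (b : Bool) (k : ℕ) : Prop := k / 2 = cond b 0 1

/-- The initial blue set. -/
def blueSet (n : ℕ) (B : Set V) (c : V → Bool) : Set (V × Fin n) :=
  {p | p.1 ∈ B ∨ ¬ wht (c p.1) p.2.val}

lemma exists_step (G : SimpleGraph V) (B S : Set V) (hB : IsSkewZeroForcingSet G B)
    (hBS : B ⊆ S) (hS : ∃ v, v ∉ S) :
    ∃ u w, G.Adj u w ∧ w ∉ S ∧ ∀ x, G.Adj u x → x ≠ w → x ∈ S := by
  by_contra hcon
  push Not at hcon
  obtain ⟨v, hv⟩ := hS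
  apply hv
  have h := hB v
  clear hv
  induction h with
  | init v hv => exact hBS hv
  | force u w huw h ih =>
    by_contra hw
    obtain ⟨x, h1, h2, h3⟩ := hcon u w huw hw
    exact h3 (ih x h1 h2)

lemma force_step (G : SimpleGraph V) (n : ℕ) (hn : 4 ≤ n) (B S : Set V) (c : V → Bool)
    (hS : ∀ x ∈ S, ∀ i : Fin n, ZFClosure (tensorProd G ⊤) (blueSet n B c) (x, i))
    (u w : V) (huw : G.Adj u w) (hx : ∀ x, G.Adj u x → x ≠ w → x ∈ S)
    (hc : u ∈ S ∨ c u ≠ c w) (i : Fin n) :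
    ZFClosure (tensorProd G ⊤) (blueSet n B c) (w, i) := by
  by_cases hi : wht (c w) i.val
  swap
  · exact .init _ (Or.inr hi)
  have hj : ∃ j : Fin n, j ≠ i ∧ wht (c w) j.val ∧
      ∀ k : Fin n, k ≠ i → k ≠ j → ¬ wht (c w) k.val := by
    unfold wht at *
    have hm : cond (c w) 0 1 ≤ 1 := by cases c w <;> simp
    generalize cond (c w) 0 1 = m at *
    refine ⟨⟨4 * m + 1 - i.val, by omega⟩, ?_, ?_, ?_⟩
    · intro h
      have := congrArg Fin.val h
      simp only at this
      omega
    · simp only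
      omega
    · intro k h1 h2
      rw [Ne, Fin.ext_iff] at h1 h2
      simp only at h2
      omega
  obtain ⟨j, hji, hjw, hk⟩ := hj
  refine .force (u, j) (w, i) ?_ ⟨huw, hji⟩ ?_
  · rcases hc with h | h
    · exact hS u h j
    · refine .init _ (Or.inr ?_)
      unfold wht at *
      simp only
      cases h1 : c u <;> cases h2 : c w <;> simp only [h1, h2, cond_true, cond_false, ne_eq, not_true_eq_false] at * <;> omega
  · rintro ⟨x, k⟩ ⟨h1, h2⟩ h3
    by_cases hxw : x = w
    · subst hxw
      refine .init _ (Or.inr (hk k ?_ ?_))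
      · rintro rfl; exact h3 rfl
      · rintro rfl; exact h2 rfl
    · exact hS x (hx x h1 hxw) k

/-- The invariant. -/
def Inv (G : SimpleGraph V) (n : ℕ) (B S : Set V) : Prop :=
  B ⊆ S ∧ ∃ c : V → Bool, ∀ c' : V → Bool,
    (∀ v, (v ∈ S ∨ ∀ x, G.Adj v x → x ∈ S) → c' v = c v) →
    ∀ x ∈ S, ∀ i : Fin n, ZFClosure (tensorProd G ⊤) (blueSet n B c') (x, i)

lemma inv_step (G : SimpleGraph V) (n : ℕ) (hn : 4 ≤ n) (B S : Set V) (hI : Inv G n B S)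
    (u w : V) (huw : G.Adj u w) (hw : w ∉ S) (hx : ∀ x, G.Adj u x → x ≠ w → x ∈ S) :
    Inv G n B (insert w S) := by
  classical
  obtain ⟨hBS, c, hc⟩ := hI
  refine ⟨hBS.trans (Set.subset_insert _ _), if u ∈ S then c else Function.update c u (!c w), ?_⟩
  intro c' hc'
  have hS : ∀ x ∈ S, ∀ i : Fin n, ZFClosure (tensorProd G ⊤) (blueSet n B c') (x, i) := by
    apply hc
    intro v hv
    rw [hc' v (hv.imp (fun h => Or.inr h) (fun h x hx => Or.inr (h x hx)))]
    split_ifs with hu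
    · rfl
    · apply Function.update_of_ne
      rintro rfl
      rcases hv with h | h
      · exact hu h
      · exact hw (h w huw)
  have hcc : u ∈ S ∨ c' u ≠ c' w := by
    by_cases hu : u ∈ S
    · exact Or.inl hu
    · right
      rw [hc' w (Or.inl (Or.inl rfl)), hc' u (Or.inr ?_)]
      · simp [hu, Function.update_of_ne huw.ne']
      · intro x h
        by_cases hxw : x = w
        · exact Or.inl hxw
        · exact Or.inr (hx x h hxw)
  rintro x (rfl | hxS) i
  · exact force_step G n hn B S c' hS u x huw hx hcc i
  · exact hS x hxS i

lemma exists_col [Finite V] (G : SimpleGraph V) (n : ℕ) (hn : 4 ≤ n) (B : Set V)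
    (hB : IsSkewZeroForcingSet G B) :
    ∃ c : V → Bool, IsZeroForcingSet (tensorProd G (⊤ : SimpleGraph (Fin n))) (blueSet n B c) := by
  have h0 : Inv G n B B :=
    ⟨subset_rfl, fun _ => true, fun c' _ x hx i => .init _ (Or.inl hx)⟩
  obtain ⟨S, hS⟩ := (Set.toFinite {S : Set V | Inv G n B S}).exists_maximal ⟨B, h0⟩
  have hall : ∀ v, v ∈ S := by
    by_contra hcon
    push Not at hcon
    obtain ⟨u, w, huw, hw, hx⟩ := exists_step G B S hB hS.1.1 hcon
    exact hw (hS.2 (inv_step G n hn B S hS.1 u w huw hw hx) (Set.subset_insert _ _) (Or.inl rfl))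
  obtain ⟨-, c, hc⟩ := hS.1
  exact ⟨c, fun v => hc c (fun _ _ => rfl) v.1 (hall _) v.2⟩

open Classical in
lemma card_nonwht (n : ℕ) (hn : 4 ≤ n) (b : Bool) :
    (Finset.univ.filter fun i : Fin n => ¬ wht b i.val).card ≤ n - 2 := by
  have h2 : 2 ≤ (Finset.univ.filter fun i : Fin n => wht b i.val).card := by
    have hm : cond b 0 1 ≤ 1 := by cases b <;> simp
    unfold wht
    generalize cond b 0 1 = m at *
    have : (({⟨2 * m, by omega⟩, ⟨2 * m + 1, by omega⟩} : Finset (Fin n))).card = 2 := by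
      apply Finset.card_pair
      simp
    refine this.symm.le.trans (Finset.card_le_card ?_)
    intro x hx
    simp only [Finset.mem_insert, Finset.mem_singleton] at hx
    simp only [Finset.mem_filter, Finset.mem_univ, true_and]
    rcases hx with rfl | rfl <;> simp only <;> omega
  have := Finset.card_filter_add_card_filter_not (s := Finset.univ) (fun i : Fin n => wht b i.val)
  simp only [Finset.card_univ, Fintype.card_fin] at this
  omega

open Classical in
lemma card_blue [Fintype V] (n : ℕ) (hn : 4 ≤ n) (B : Finset V) (c : V → Bool) :
    (Finset.univ.filter fun p : V × Fin n => p ∈ blueSet n (↑B) c).card ≤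
      (n - 2) * Fintype.card V + 2 * B.card := by
  have h : (Finset.univ.filter fun p : V × Fin n => p ∈ blueSet n (↑B) c).card ≤
      ∑ v : V, ((n - 2) + if v ∈ B then 2 else 0) := by
    rw [Finset.card_filter, Fintype.sum_prod_type]
    apply Finset.sum_le_sum
    intro v _
    rw [← Finset.card_filter]
    by_cases hv : v ∈ B
    · refine (Finset.card_le_univ _).trans ?_
      simp only [Fintype.card_fin, hv, if_true]
      omega
    · simpa [blueSet, hv] using card_nonwht n hn (c v)
  refine h.trans (le_of_eq ?_)
  rw [Finset.sum_add_distrib, ← Finset.sum_filter]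
  simp [mul_comm]

/-- For any finite simple graph `G` and `n ≥ 4`,
`Z(G × K_n) ≤ (n−2)·|V(G)| + 2·Z⁻(G)`. -/
theorem stmt0 {V : Type*} [Fintype V] (G : SimpleGraph V) (n : ℕ) (hn : 4 ≤ n) :
    zeroForcingNumber (tensorProd G (⊤ : SimpleGraph (Fin n))) ≤
      (n - 2) * Fintype.card V + 2 * skewZeroForcingNumber G := by
  classical
  have hne : {k | ∃ B : Finset V, B.card = k ∧ IsSkewZeroForcingSet G ↑B}.Nonempty :=
    ⟨_, Finset.univ, rfl, fun v => .init v (by simp)⟩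
  obtain ⟨B, hcard, hB⟩ := Nat.sInf_mem hne
  obtain ⟨c, hc⟩ := exists_col G n hn (↑B) hB
  have h := card_blue n hn B c
  rw [hcard] at h
  refine le_trans (Nat.sInf_le ⟨_, rfl, ?_⟩) h
  simpa using hc

end PaperPD
end

section
/- Let H_3 be the 3-sun, i.e., the graph on six vertices obtained from a triangle by attaching one pendant vertex to each vertex of the triangle. Then Z(H_3 × K_3) ≥ 7. In particular, since Z⁻(H_3) = 0, the bound Z(G × K_n) ≤ (n−2)|V(G)| + 2Z⁻(G) fails for G = H_3 and n = 3. -/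
namespace PaperPD

open SimpleGraph

variable {V α β : Type*}

/-- The 3-sun: a triangle on vertices 0, 1, 2 with pendant vertices 3, 4, 5
attached to 0, 1, 2 respectively. -/
def sun3 : SimpleGraph (Fin 6) :=
  SimpleGraph.fromRel (fun i j =>
    (i = 0 ∧ j = 1) ∨ (i = 0 ∧ j = 2) ∨ (i = 1 ∧ j = 2) ∨
    (i = 0 ∧ j = 3) ∨ (i = 1 ∧ j = 4) ∨ (i = 2 ∧ j = 5))

instance sun3Dec : DecidableRel sun3.Adj := fun a b => by
  unfold sun3 SimpleGraph.fromRel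
  dsimp only
  infer_instance

instance prodDec : DecidableRel (tensorProd sun3 (⊤ : SimpleGraph (Fin 3))).Adj := fun a b => by
  unfold tensorProd
  dsimp only
  infer_instance

/-- membership in the vertex set coded by the bits of `F` -/
def mem (F : ℕ) (v : Fin 6 × Fin 3) : Bool := F.testBit (3 * v.1.val + v.2.val)

def IsFort (F : ℕ) : Prop := ∀ u w, mem F u = false → mem F w = true →
  (tensorProd sun3 (⊤ : SimpleGraph (Fin 3))).Adj u w →
  ∃ x, (tensorProd sun3 (⊤ : SimpleGraph (Fin 3))).Adj u x ∧ x ≠ w ∧ mem F x = true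

instance fortDec : DecidablePred IsFort := fun F => by
  unfold IsFort
  infer_instance

def fiberForts : List ℕ := [7, 56, 448, 3584, 28672, 229376]

def forts : List ℕ := [13860, 23058, 27657, 39942, 57904, 76293, 87080, 145432, 148995, 100100,
  110880, 166530, 184464, 199745, 221256, 116928, 173376, 201600, 60422, 88581, 112664, 116227,
  144899, 174597, 185384, 203782, 221744, 13852, 23082, 27697, 110816, 184656, 221576, 100036,
  166722, 200065, 122129, 125706, 179361, 190092, 211554, 218708, 13851, 23085, 27702]

theorem fiber_isFort : ∀ F ∈ fiberForts, IsFort F := by decide +kernel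

theorem forts_isFort : ∀ F ∈ forts, IsFort F := by decide +kernel

theorem fiber_cover : ∀ a : Fin 6, ∃ F ∈ fiberForts, (∃ v, mem F v = true) ∧
    ∀ v, mem F v = true → v.1 = a := by decide +kernel

theorem forts_nonempty : ∀ F ∈ forts, ∃ v, mem F v = true := by decide +kernel

theorem forts_cover_any : ∀ a b c d e g : Fin 3, forts.any (fun F =>
    !mem F (0, a) && !mem F (1, b) && !mem F (2, c) &&
    !mem F (3, d) && !mem F (4, e) && !mem F (5, g)) = true := by decide +kernel

theorem forts_cover (a b c d e g : Fin 3) : ∃ F ∈ forts,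
    mem F (0, a) = false ∧ mem F (1, b) = false ∧ mem F (2, c) = false ∧
    mem F (3, d) = false ∧ mem F (4, e) = false ∧ mem F (5, g) = false := by
  obtain ⟨F, hF, h⟩ := List.any_eq_true.1 (forts_cover_any a b c d e g)
  refine ⟨F, hF, ?_⟩
  simpa [and_assoc] using h

theorem fort_hit {F : ℕ} (hF : IsFort F) (hne : ∃ v, mem F v = true)
    {B : Finset (Fin 6 × Fin 3)}
    (hB : IsZeroForcingSet (tensorProd sun3 (⊤ : SimpleGraph (Fin 3))) (B : Set (Fin 6 × Fin 3))) :
    ∃ v ∈ B, mem F v = true := by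
  by_contra hcon
  push Not at hcon
  have key : ∀ v, ZFClosure (tensorProd sun3 (⊤ : SimpleGraph (Fin 3)))
      (B : Set (Fin 6 × Fin 3)) v → mem F v = false := by
    intro v hv
    induction hv with
    | init v hv => simpa using hcon v (by simpa using hv)
    | force u w hu huw h ihu ih =>
      by_contra hw
      obtain ⟨x, hx, hxw, hxF⟩ := hF u w ihu (by simpa using hw) huw
      have := ih x hx hxw
      simp [this] at hxF
  obtain ⟨v, hv⟩ := hne
  have := key v (hB v)
  simp [this] at hv

theorem card_ge {B : Finset (Fin 6 × Fin 3)}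
    (hB : IsZeroForcingSet (tensorProd sun3 (⊤ : SimpleGraph (Fin 3))) (B : Set (Fin 6 × Fin 3))) :
    7 ≤ B.card := by
  by_contra hlt
  have h1 : ∀ a : Fin 6, ∃ i : Fin 3, (a, i) ∈ B := by
    intro a
    obtain ⟨F, hF, hne, ha⟩ := fiber_cover a
    obtain ⟨v, hv, hvF⟩ := fort_hit (fiber_isFort F hF) hne hB
    have := ha v hvF
    subst this
    exact ⟨v.2, hv⟩
  choose f hf using h1
  have h2 : Finset.univ.image (fun a => (a, f a)) = B := by
    apply Finset.eq_of_subset_of_card_le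
    · intro x hx
      simp only [Finset.mem_image, Finset.mem_univ, true_and] at hx
      obtain ⟨a, rfl⟩ := hx
      exact hf a
    · rw [Finset.card_image_of_injective _ (fun a b h => (Prod.mk.inj h).1)]
      simp
      omega
  obtain ⟨F, hF, h⟩ := forts_cover (f 0) (f 1) (f 2) (f 3) (f 4) (f 5)
  obtain ⟨v, hv, hvF⟩ := fort_hit (forts_isFort F hF) (forts_nonempty F hF) hB
  rw [← h2] at hv
  simp only [Finset.mem_image, Finset.mem_univ, true_and] at hv
  obtain ⟨a, rfl⟩ := hv
  obtain ⟨h0, h1, h2, h3, h4, h5⟩ := h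
  fin_cases a <;> simp_all

theorem skew_empty : IsSkewZeroForcingSet sun3 ((∅ : Finset (Fin 6)) : Set (Fin 6)) := by
  have e0 : ∀ x, sun3.Adj 3 x → x = 0 := by decide +kernel
  have e1 : ∀ x, sun3.Adj 4 x → x = 1 := by decide +kernel
  have e2 : ∀ x, sun3.Adj 5 x → x = 2 := by decide +kernel
  have c0 : SkewZFClosure sun3 ((∅ : Finset (Fin 6)) : Set (Fin 6)) 0 :=
    .force 3 0 (by decide +kernel) (fun x hx hne => absurd (e0 x hx) hne)
  have c1 : SkewZFClosure sun3 ((∅ : Finset (Fin 6)) : Set (Fin 6)) 1 :=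
    .force 4 1 (by decide +kernel) (fun x hx hne => absurd (e1 x hx) hne)
  have c2 : SkewZFClosure sun3 ((∅ : Finset (Fin 6)) : Set (Fin 6)) 2 :=
    .force 5 2 (by decide +kernel) (fun x hx hne => absurd (e2 x hx) hne)
  have f0 : ∀ x, sun3.Adj 0 x → x ≠ 3 → x = 1 ∨ x = 2 := by decide +kernel
  have f1 : ∀ x, sun3.Adj 1 x → x ≠ 4 → x = 0 ∨ x = 2 := by decide +kernel
  have f2 : ∀ x, sun3.Adj 2 x → x ≠ 5 → x = 0 ∨ x = 1 := by decide +kernel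
  have c3 : SkewZFClosure sun3 ((∅ : Finset (Fin 6)) : Set (Fin 6)) 3 :=
    .force 0 3 (by decide +kernel) (fun x hx hne => by
      rcases f0 x hx hne with rfl | rfl <;> assumption)
  have c4 : SkewZFClosure sun3 ((∅ : Finset (Fin 6)) : Set (Fin 6)) 4 :=
    .force 1 4 (by decide +kernel) (fun x hx hne => by
      rcases f1 x hx hne with rfl | rfl <;> assumption)
  have c5 : SkewZFClosure sun3 ((∅ : Finset (Fin 6)) : Set (Fin 6)) 5 :=
    .force 2 5 (by decide +kernel) (fun x hx hne => by
      rcases f2 x hx hne with rfl | rfl <;> assumption)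
  intro v
  fin_cases v <;> assumption

/-- `Z(H₃ × K₃) ≥ 7`, and `Z⁻(H₃) = 0`, so the bound
`Z(G × K_n) ≤ (n−2)|V(G)| + 2Z⁻(G)` fails for `G = H₃`, `n = 3`. -/
theorem stmt1 :
    7 ≤ zeroForcingNumber (tensorProd sun3 (⊤ : SimpleGraph (Fin 3))) ∧
    skewZeroForcingNumber sun3 = 0 := by
  constructor
  · unfold zeroForcingNumber
    apply le_csInf
    · exact ⟨_, Finset.univ, rfl, fun v => .init v (by simp)⟩
    · rintro k ⟨B, rfl, hB⟩
      exact card_ge hB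
  · unfold skewZeroForcingNumber
    exact Nat.sInf_eq_zero.2 (Or.inl ⟨∅, rfl, skew_empty⟩)

end PaperPD
end

section
/- If t ≥ 2 is even and n ≥ 3, then M(P_t × K_n) = Z(P_t × K_n) = (n−2)t, where P_t is the path on t vertices and K_n is the complete graph on n vertices. -/
namespace PaperPD

open SimpleGraph

variable {V α β : Type*}

theorem ker_vanish {V : Type*} [Fintype V] (G : SimpleGraph V) (A : Matrix V V ℝ)
    (hA : MatrixOfGraph G A) (B : Set V) (v : V → ℝ) (hv : A.mulVec v = 0)
    (hB : ∀ x ∈ B, v x = 0) : ∀ x, ZFClosure G B x → v x = 0 := by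
  intro x hx
  induction hx with
  | init y hy => exact hB y hy
  | force u w hu huw h ihu ih =>
    have h1 : ∑ y, A u y * v y = 0 := by
      have := congrFun hv u
      simpa [Matrix.mulVec, dotProduct] using this
    have h2 : ∑ y, A u y * v y = A u w * v w := by
      apply Finset.sum_eq_single w
      · intro y _ hyw
        by_cases hyu : u = y
        · subst hyu; rw [ihu, mul_zero]
        · by_cases hadj : G.Adj u y
          · rw [ih y hadj hyw, mul_zero]
          · have : A u y = 0 := by
              by_contra h0
              exact hadj ((hA.2 u y hyu).1 h0)
            rw [this, zero_mul]
      · intro h; exact absurd (Finset.mem_univ _) h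
    have h3 : A u w ≠ 0 := (hA.2 u w huw.ne).2 huw
    rw [h2] at h1
    exact (mul_eq_zero.1 h1).resolve_left h3

theorem nullity_le {V : Type*} [Fintype V] [DecidableEq V] (G : SimpleGraph V)
    (A : Matrix V V ℝ) (hA : MatrixOfGraph G A) (B : Finset V)
    (hB : IsZeroForcingSet G (B : Set V)) : nullity A ≤ B.card := by
  have hrn := A.mulVecLin.finrank_range_add_finrank_ker
  rw [Module.finrank_fintype_fun_eq_card] at hrn
  have hr : A.rank = Module.finrank ℝ (LinearMap.range A.mulVecLin) := rfl
  have hle : Module.finrank ℝ (LinearMap.ker A.mulVecLin) ≤ B.card := by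
    let f : LinearMap.ker A.mulVecLin →ₗ[ℝ] (B → ℝ) :=
      { toFun := fun v b => v.1 b.1
        map_add' := fun _ _ => rfl
        map_smul' := fun _ _ => rfl }
    have hf : Function.Injective f := by
      rw [injective_iff_map_eq_zero]
      intro v hv
      apply Subtype.ext
      funext x
      apply ker_vanish G A hA (B : Set V) v.1 _ _ x (hB x)
      · exact v.2
      · intro y hy
        exact congrFun hv ⟨y, hy⟩
    have := LinearMap.finrank_le_finrank_of_injective hf
    simpa using this
  unfold nullity
  omega

/-- signed path matrix -/
def skewS (t : ℕ) (i j : Fin t) : ℝ :=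
  if i.1 + 1 = j.1 then 1 else if j.1 + 1 = i.1 then -1 else 0

def bigA (t n : ℕ) : Matrix (Fin t × Fin n) (Fin t × Fin n) ℝ :=
  fun p q => skewS t p.1 q.1 * ((p.2.1 : ℝ) - (q.2.1 : ℝ))

theorem bigA_graph (t n : ℕ) :
    MatrixOfGraph (tensorProd (pathGraph t) (⊤ : SimpleGraph (Fin n))) (bigA t n) := by
  constructor
  · ext p q
    simp only [Matrix.transpose_apply, bigA, skewS]
    split_ifs <;> first | omega | ring
  · intro p q _
    have h1 : ((p.2.1 : ℝ) - (q.2.1 : ℝ)) ≠ 0 ↔ p.2 ≠ q.2 := by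
      rw [sub_ne_zero, Nat.cast_injective.ne_iff, Fin.val_injective.ne_iff]
    have h2 : skewS t p.1 q.1 ≠ 0 ↔ (pathGraph t).Adj p.1 q.1 := by
      rw [pathGraph_adj]
      unfold skewS
      split_ifs <;> simp_all
    simp only [bigA, mul_ne_zero_iff, h1, h2, tensorProd, top_adj]

theorem bigA_rank (t n : ℕ) : (bigA t n).rank ≤ 2 * t := by
  let P : Matrix (Fin t × Fin n) (Fin t × Fin 2) ℝ :=
    fun p q => skewS t p.1 q.1 * (if q.2 = 0 then (p.2.1 : ℝ) else -1)
  let Q : Matrix (Fin t × Fin 2) (Fin t × Fin n) ℝ :=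
    fun p q => if p.1 = q.1 then (if p.2 = 0 then 1 else (q.2.1 : ℝ)) else 0
  have h : bigA t n = P * Q := by
    ext p q
    rw [Matrix.mul_apply, Fintype.sum_prod_type]
    simp [P, Q, bigA, Finset.sum_add_distrib]
    ring
  rw [h]
  calc (P * Q).rank ≤ P.rank := Matrix.rank_mul_le_left P Q
    _ ≤ Fintype.card (Fin t × Fin 2) := Matrix.rank_le_card_width P
    _ = 2 * t := by simp [mul_comm]

theorem bigA_nullity (t n : ℕ) : (n - 2) * t ≤ nullity (bigA t n) := by
  have := bigA_rank t n
  unfold nullity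
  simp only [Fintype.card_prod, Fintype.card_fin]
  rw [Nat.sub_mul, Nat.mul_comm n t]
  omega

/-- initially white vertices -/
def whiteP (t n : ℕ) (p : Fin t × Fin n) : Prop :=
  p.2.1 = 0 ∨ (p.1.1 % 2 = 0 ∧ p.2.1 = 1) ∨ (p.1.1 % 2 = 1 ∧ p.2.1 = 2)

theorem exists_zf (t n : ℕ) (hte : Even t) (hn : 3 ≤ n) :
    ∃ B : Finset (Fin t × Fin n), B.card = (n - 2) * t ∧
      IsZeroForcingSet (tensorProd (pathGraph t) (⊤ : SimpleGraph (Fin n))) (B : Set _) := by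
  classical
  set G := tensorProd (pathGraph t) (⊤ : SimpleGraph (Fin n)) with hG
  let f : Fin t × Bool → Fin t × Fin n := fun p =>
    (p.1, if p.2 then ⟨0, by omega⟩ else if p.1.1 % 2 = 0 then ⟨1, by omega⟩ else ⟨2, by omega⟩)
  have hf : Function.Injective f := by
    rintro ⟨i, s⟩ ⟨j, s'⟩ h
    simp only [f, Prod.mk.injEq] at h
    obtain ⟨rfl, h⟩ := h
    cases s <;> cases s' <;> simp at h ⊢ <;> split_ifs at h <;> simp at h
  let W : Finset (Fin t × Fin n) := Finset.univ.image f
  have hW : W.card = t * 2 := by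
    rw [Finset.card_image_of_injective _ hf]; simp
  refine ⟨Wᶜ, ?_, ?_⟩
  · rw [Finset.card_compl, hW]
    simp only [Fintype.card_prod, Fintype.card_fin]
    rw [Nat.sub_mul, Nat.mul_comm n t, Nat.mul_comm 2 t]
  have hb : ∀ (i : ℕ) (hi : i < t) (x : ℕ) (hx : x < n),
      ¬ whiteP t n (⟨i, hi⟩, ⟨x, hx⟩) → ZFClosure G (↑Wᶜ) (⟨i, hi⟩, ⟨x, hx⟩) := by
    intro i hi x hx h
    apply ZFClosure.init
    simp only [Finset.coe_compl, Set.mem_compl_iff, Finset.mem_coe, W, Finset.mem_image, not_exists]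
    rintro ⟨j, s⟩ ⟨-, hh⟩
    apply h
    simp only [f, Prod.mk.injEq] at hh
    obtain ⟨rfl, hh⟩ := hh
    unfold whiteP
    have hh := congrArg Fin.val hh
    simp only at hh ⊢
    split_ifs at hh <;> simp at hh <;> omega
  -- forcing in coordinates
  have hforce : ∀ (i : ℕ) (hi : i < t) (x : ℕ) (hx : x < n) (j : ℕ) (hj : j < t) (y : ℕ)
      (hy : y < n), ZFClosure G (↑Wᶜ) (⟨i, hi⟩, ⟨x, hx⟩) → (i + 1 = j ∨ j + 1 = i) → x ≠ y →
      (∀ (k : ℕ) (hk : k < t) (z : ℕ) (hz : z < n), (i + 1 = k ∨ k + 1 = i) → x ≠ z →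
        ¬ (k = j ∧ z = y) → ZFClosure G (↑Wᶜ) (⟨k, hk⟩, ⟨z, hz⟩)) →
      ZFClosure G (↑Wᶜ) (⟨j, hj⟩, ⟨y, hy⟩) := by
    intro i hi x hx j hj y hy h1 h2 h3 h4
    apply ZFClosure.force _ _ h1
    · refine ⟨?_, ?_⟩
      · rw [pathGraph_adj]; exact h2
      · simpa using h3
    · rintro ⟨⟨k, hk⟩, ⟨z, hz⟩⟩ ⟨ha, hb⟩ hne
      rw [pathGraph_adj] at ha
      apply h4 k hk z hz ha
      · simpa using hb
      · simpa using hne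
  obtain ⟨m, hm⟩ := hte
  have p1 : ∀ k, ∀ h : 2 * k + 1 < t, ZFClosure G (↑Wᶜ) (⟨2 * k + 1, h⟩, ⟨0, by omega⟩) := by
    intro k
    induction k with
    | zero =>
      intro h
      apply hforce 0 (by omega) 2 (by omega) _ _ _ _ (hb _ _ _ _ (by simp [whiteP])) (by omega)
        (by omega)
      intro k hk z hz h1 h2 h3
      apply hb
      simp only [whiteP]
      omega
    | succ k ih =>
      intro h
      apply hforce (2 * k + 2) (by omega) 2 (by omega) _ _ _ _
        (hb _ _ _ _ (by simp [whiteP])) (by omega) (by omega)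
      intro j hk z hz h1 h2 h3
      by_cases h0 : j = 2 * k + 1 ∧ z = 0
      · obtain ⟨rfl, rfl⟩ := h0
        exact ih _
      apply hb
      simp only [whiteP]
      omega
  have p2 : ∀ k, ∀ l (h : l < t), l + 2 * k + 2 = t →
      ZFClosure G (↑Wᶜ) (⟨l, h⟩, ⟨0, by omega⟩) := by
    intro k
    induction k with
    | zero =>
      intro l h hl
      apply hforce (l + 1) (by omega) 1 (by omega) _ _ _ _
        (hb _ _ _ _ (by simp only [whiteP]; omega)) (by omega) (by omega)
      intro k hk z hz h1 h2 h3
      apply hb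
      simp only [whiteP]
      omega
    | succ k ih =>
      intro l h hl
      apply hforce (l + 1) (by omega) 1 (by omega) _ _ _ _
        (hb _ _ _ _ (by simp only [whiteP]; omega)) (by omega) (by omega)
      intro j hk z hz h1 h2 h3
      by_cases h0 : j = l + 2 ∧ z = 0
      · obtain ⟨rfl, rfl⟩ := h0
        exact ih _ _ (by omega)
      apply hb
      simp only [whiteP]
      omega
  have p12 : ∀ l (h : l < t), ZFClosure G (↑Wᶜ) (⟨l, h⟩, ⟨0, by omega⟩) := by
    intro l h
    rcases Nat.even_or_odd' l with ⟨k, rfl | rfl⟩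
    · exact p2 (m - k - 1) _ _ (by omega)
    · exact p1 _ _
  have p3 : ∀ k, ∀ h : 2 * k + 1 < t, ZFClosure G (↑Wᶜ) (⟨2 * k + 1, h⟩, ⟨2, by omega⟩) := by
    intro k
    induction k with
    | zero =>
      intro h
      apply hforce 0 (by omega) 0 (by omega) _ _ _ _ (p12 _ _) (by omega) (by omega)
      intro k hk z hz h1 h2 h3
      apply hb
      simp only [whiteP]
      omega
    | succ k ih =>
      intro h
      apply hforce (2 * k + 2) (by omega) 0 (by omega) _ _ _ _ (p12 _ _) (by omega) (by omega)
      intro j hk z hz h1 h2 h3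
      by_cases h0 : j = 2 * k + 1 ∧ z = 2
      · obtain ⟨rfl, rfl⟩ := h0
        exact ih _
      apply hb
      simp only [whiteP]
      omega
  have p4 : ∀ k, ∀ l (h : l < t), l + 2 * k + 2 = t →
      ZFClosure G (↑Wᶜ) (⟨l, h⟩, ⟨1, by omega⟩) := by
    intro k
    induction k with
    | zero =>
      intro l h hl
      apply hforce (l + 1) (by omega) 0 (by omega) _ _ _ _ (p12 _ _) (by omega) (by omega)
      intro k hk z hz h1 h2 h3
      apply hb
      simp only [whiteP]
      omega
    | succ k ih =>
      intro l h hl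
      apply hforce (l + 1) (by omega) 0 (by omega) _ _ _ _ (p12 _ _) (by omega) (by omega)
      intro j hk z hz h1 h2 h3
      by_cases h0 : j = l + 2 ∧ z = 1
      · obtain ⟨rfl, rfl⟩ := h0
        exact ih _ _ (by omega)
      apply hb
      simp only [whiteP]
      omega
  rintro ⟨⟨i, hi⟩, ⟨x, hx⟩⟩
  by_cases hw : whiteP t n (⟨i, hi⟩, ⟨x, hx⟩)
  · simp only [whiteP] at hw
    rcases hw with rfl | ⟨h1, rfl⟩ | ⟨h1, rfl⟩
    · exact p12 _ _
    · exact p4 ((t - i - 2) / 2) _ _ (by omega)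
    · obtain ⟨k, rfl⟩ : ∃ k, i = 2 * k + 1 := ⟨i / 2, by omega⟩
      exact p3 _ _
  · exact hb _ _ _ _ hw

/-- If `t ≥ 2` is even and `n ≥ 3`, then
`M(P_t × K_n) = Z(P_t × K_n) = (n−2)t`. -/
theorem stmt2 (t n : ℕ) (ht : 2 ≤ t) (hte : Even t) (hn : 3 ≤ n) :
    maxNullity (tensorProd (pathGraph t) (⊤ : SimpleGraph (Fin n))) = (n - 2) * t ∧
    zeroForcingNumber (tensorProd (pathGraph t) (⊤ : SimpleGraph (Fin n))) = (n - 2) * t := by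
  obtain ⟨B, hBc, hB⟩ := exists_zf t n hte hn
  have hA := bigA_graph t n
  have hAn : nullity (bigA t n) = (n - 2) * t :=
    le_antisymm (hBc ▸ nullity_le _ _ hA B hB) (bigA_nullity t n)
  constructor
  · apply IsGreatest.csSup_eq
    refine ⟨⟨_, hA, hAn⟩, ?_⟩
    rintro k ⟨A, hA', rfl⟩
    exact hBc ▸ nullity_le _ _ hA' B hB
  · apply IsLeast.csInf_eq
    refine ⟨⟨B, hBc, hB⟩, ?_⟩
    rintro k ⟨C, rfl, hC⟩
    exact hAn ▸ nullity_le _ _ hA C hC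

end PaperPD
end

section
/- If t ≥ 2 is even, then Z(P_t × K_3) ≤ t; explicitly, labeling the vertices of P_t × K_3 as pairs (r,s) with 1 ≤ r ≤ t and 1 ≤ s ≤ 3, the set B = { (2i−1,3), (2i,1) : 1 ≤ i ≤ t/2 } is a zero forcing set of P_t × K_3. -/
namespace PaperPD

open SimpleGraph

variable {V α β : Type*}

theorem zf_right (t : ℕ) (B : Set (Fin t × Fin 3)) (a b c : Fin 3)
    (hac : a ≠ c) (hx : ∀ x : Fin 3, x ≠ a → x ≠ c → x = b)
    (h1 : ∀ r : Fin t, Even r.val →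
      ZFClosure (tensorProd (pathGraph t) (⊤ : SimpleGraph (Fin 3))) B (r, a))
    (h2 : ∀ r : Fin t, Odd r.val →
      ZFClosure (tensorProd (pathGraph t) (⊤ : SimpleGraph (Fin 3))) B (r, b)) :
    ∀ i : ℕ, ∀ h : 2 * i + 1 < t,
      ZFClosure (tensorProd (pathGraph t) (⊤ : SimpleGraph (Fin 3))) B (⟨2 * i + 1, h⟩, c) := by
  intro i
  induction i with
  | zero =>
    intro h
    refine ZFClosure.force (⟨0, by omega⟩, a) _ (h1 _ (by simp)) ?_ ?_
    · exact ⟨by simp [pathGraph_adj], hac⟩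
    · rintro ⟨⟨r, hr⟩, x⟩ ⟨hA, hB⟩ hne
      simp only [pathGraph_adj] at hA
      have hr1 : r = 1 := by omega
      subst hr1
      have hxc : x ≠ c := fun e => hne (by simp [e])
      rw [hx x (fun e => hB e.symm) hxc]
      exact h2 _ (by simp)
  | succ i ih =>
    intro h
    refine ZFClosure.force (⟨2 * i + 2, by omega⟩, a) _ (h1 _ ⟨i + 1, by simp; omega⟩) ?_ ?_
    · exact ⟨by simp [pathGraph_adj]; omega, hac⟩
    · rintro ⟨⟨r, hr⟩, x⟩ ⟨hA, hB⟩ hne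
      simp only [pathGraph_adj] at hA
      by_cases hxc : x = c
      · subst hxc
        have hr1 : r = 2 * i + 1 := by
          rcases hA with hA | hA
          · exact absurd (by simp; omega) hne
          · omega
        subst hr1
        exact ih _
      · rw [hx x (fun e => hB e.symm) hxc]
        refine h2 _ ?_
        rw [Nat.odd_iff]
        simp only
        omega

theorem zf_left (t : ℕ) (hte : Even t) (B : Set (Fin t × Fin 3)) (a b c : Fin 3)
    (hac : a ≠ c) (hx : ∀ x : Fin 3, x ≠ a → x ≠ c → x = b)
    (h1 : ∀ r : Fin t, Odd r.val →
      ZFClosure (tensorProd (pathGraph t) (⊤ : SimpleGraph (Fin 3))) B (r, a))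
    (h2 : ∀ r : Fin t, Even r.val →
      ZFClosure (tensorProd (pathGraph t) (⊤ : SimpleGraph (Fin 3))) B (r, b)) :
    ∀ i k : ℕ, ∀ h : k < t, k + 2 * i + 2 = t →
      ZFClosure (tensorProd (pathGraph t) (⊤ : SimpleGraph (Fin 3))) B (⟨k, h⟩, c) := by
  rw [Nat.even_iff] at hte
  intro i
  induction i with
  | zero =>
    intro k h hk
    refine ZFClosure.force (⟨k + 1, by omega⟩, a) _ (h1 _ (by rw [Nat.odd_iff]; simp only; omega))
      ?_ ?_
    · exact ⟨by simp [pathGraph_adj], hac⟩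
    · rintro ⟨⟨r, hr⟩, x⟩ ⟨hA, hB⟩ hne
      simp only [pathGraph_adj] at hA
      have hr1 : r = k := by omega
      subst hr1
      have hxc : x ≠ c := fun e => hne (by simp [e])
      rw [hx x (fun e => hB e.symm) hxc]
      exact h2 _ (by rw [Nat.even_iff]; simp only; omega)
  | succ i ih =>
    intro k h hk
    refine ZFClosure.force (⟨k + 1, by omega⟩, a) _ (h1 _ (by rw [Nat.odd_iff]; simp only; omega))
      ?_ ?_
    · exact ⟨by simp [pathGraph_adj], hac⟩
    · rintro ⟨⟨r, hr⟩, x⟩ ⟨hA, hB⟩ hne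
      simp only [pathGraph_adj] at hA
      by_cases hxc : x = c
      · subst hxc
        have hr1 : r = k + 2 := by
          rcases hA with hA | hA
          · omega
          · exact absurd (by simp; omega) hne
        subst hr1
        exact ih _ _ (by omega)
      · rw [hx x (fun e => hB e.symm) hxc]
        refine h2 _ ?_
        rw [Nat.even_iff]
        simp only
        omega

/-- For even `t ≥ 2`, the set `B = {(2i−1,3),(2i,1) : 1 ≤ i ≤ t/2}`
(1-indexed; here 0-indexed: even rows with column 2 and odd rows with column 0)
is a zero forcing set of `P_t × K_3`, so `Z(P_t × K₃) ≤ t`. -/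
theorem stmt4 (t : ℕ) (ht : 2 ≤ t) (hte : Even t) :
    IsZeroForcingSet (tensorProd (pathGraph t) (⊤ : SimpleGraph (Fin 3)))
      {p : Fin t × Fin 3 | (Even p.1.val ∧ p.2.val = 2) ∨ (Odd p.1.val ∧ p.2.val = 0)} ∧
    zeroForcingNumber (tensorProd (pathGraph t) (⊤ : SimpleGraph (Fin 3))) ≤ t := by
  have key : IsZeroForcingSet (tensorProd (pathGraph t) (⊤ : SimpleGraph (Fin 3)))
      {p : Fin t × Fin 3 | (Even p.1.val ∧ p.2.val = 2) ∨ (Odd p.1.val ∧ p.2.val = 0)} := by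
    set B := {p : Fin t × Fin 3 | (Even p.1.val ∧ p.2.val = 2) ∨ (Odd p.1.val ∧ p.2.val = 0)}
      with hB
    have R := fun (a b c : Fin 3) hac hx h1 h2 (r : Fin t) (hr : Odd r.val) =>
      (show ZFClosure (tensorProd (pathGraph t) (⊤ : SimpleGraph (Fin 3))) B (r, c) by
        obtain ⟨i, hi⟩ := hr
        have := zf_right t B a b c hac hx h1 h2 i (by omega)
        have e : (⟨2 * i + 1, by omega⟩ : Fin t) = r := Fin.ext hi.symm
        rw [e] at this
        exact this)
    have L := fun (a b c : Fin 3) hac hx h1 h2 (r : Fin t) (hr : Even r.val) =>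
      zf_left t hte B a b c hac hx h1 h2 ((t - 2 - r.val) / 2) r.val r.isLt (by
        rw [Nat.even_iff] at hr hte
        have := r.isLt
        omega)
    have e2 : ∀ r : Fin t, Even r.val → ZFClosure (tensorProd (pathGraph t) (⊤ : SimpleGraph (Fin 3))) B (r, 2) :=
      fun r hr => ZFClosure.init _ (Or.inl ⟨hr, rfl⟩)
    have o0 : ∀ r : Fin t, Odd r.val → ZFClosure (tensorProd (pathGraph t) (⊤ : SimpleGraph (Fin 3))) B (r, 0) :=
      fun r hr => ZFClosure.init _ (Or.inr ⟨hr, rfl⟩)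
    have o1 := R 2 0 1 (by decide) (by decide) e2 o0
    have e1 := L 0 2 1 (by decide) (by decide) o0 e2
    have o2 := R 1 0 2 (by decide) (by decide) e1 o0
    have e0 := L 1 2 0 (by decide) (by decide) o1 e2
    rintro ⟨r, s⟩
    rcases Nat.even_or_odd r.val with hr | hr
    · fin_cases s
      exacts [e0 r hr, e1 r hr, e2 r hr]
    · fin_cases s
      exacts [o0 r hr, o1 r hr, o2 r hr]
  refine ⟨key, ?_⟩
  classical
  let F : Finset (Fin t × Fin 3) := Finset.univ.filter fun p =>
    (Even p.1.val ∧ p.2.val = 2) ∨ (Odd p.1.val ∧ p.2.val = 0)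
  have hF : F.card ≤ t := by
    have := Finset.card_le_card_of_injOn (s := F) (t := (Finset.univ : Finset (Fin t))) Prod.fst
      (fun _ _ => by simp) (by
        rintro ⟨r, s⟩ h ⟨r', s'⟩ h' (rfl : r = r')
        simp only [F, Finset.coe_filter, Finset.mem_univ, true_and, Set.mem_ofPred_eq,
          Nat.even_iff, Nat.odd_iff] at h h'
        have : s = s' := Fin.ext (by omega)
        rw [this])
    simpa using this
  refine le_trans (Nat.sInf_le ⟨F, rfl, ?_⟩) hF
  simpa [F] using key

end PaperPD
end

section
/- If n ≥ 3 and t ≥ 3, then M(C_t × K_n) = Z(C_t × K_n) = (n−2)t + 2 if t is odd, and M(C_t × K_n) = Z(C_t × K_n) = (n−2)t + 4 if t is even. -/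
namespace PaperPD

open SimpleGraph

variable {V α β : Type*}

section helpers

theorem nullity_le_of_zf [Fintype V] [DecidableEq V] (G : SimpleGraph V) (A : Matrix V V ℝ)
    (hA : MatrixOfGraph G A) (B : Finset V) (hB : IsZeroForcingSet G ↑B) : nullity A ≤ B.card := by
  have key : ∀ x : V → ℝ, A.mulVec x = 0 → (∀ v ∈ B, x v = 0) → x = 0 := by
    intro x hx hxB
    funext v
    have := hB v
    induction this with
    | init v hv => exact hxB v (by simpa using hv)
    | force u w hu huw h ihu ih =>
      have h1 : ∑ j, A u j * x j = 0 := congrFun hx u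
      rw [Finset.sum_eq_single w] at h1
      · have h2 : A u w ≠ 0 := (hA.2 u w huw.ne).2 huw
        simpa [h2] using h1
      · intro b _ hbw
        by_cases hub : u = b
        · subst hub
          have h3 : x u = 0 := ihu
          rw [h3, mul_zero]
        · by_cases hadj : G.Adj u b
          · have h3 : x b = 0 := ih b hadj hbw
            rw [h3, mul_zero]
          · have : A u b = 0 := by
              by_contra hne
              exact hadj ((hA.2 u b hub).1 hne)
            rw [this, zero_mul]
      · simp
  let f : (LinearMap.ker A.mulVecLin) →ₗ[ℝ] (B → ℝ) :=
    (LinearMap.funLeft ℝ ℝ (fun b : B => (b : V))) ∘ₗ (LinearMap.ker A.mulVecLin).subtype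
  have hf : Function.Injective f := by
    rw [injective_iff_map_eq_zero]
    rintro ⟨x, hx⟩ h
    apply Subtype.ext
    apply key x
    · simpa using hx
    · intro v hv
      exact congrFun h ⟨v, hv⟩
  have h1 := LinearMap.finrank_le_finrank_of_injective hf
  have h2 := LinearMap.finrank_range_add_finrank_ker A.mulVecLin
  rw [Module.finrank_fintype_fun_eq_card] at h1 h2
  rw [Fintype.card_coe] at h1
  unfold nullity Matrix.rank
  omega

theorem sandwich [Fintype V] [DecidableEq V] (G : SimpleGraph V) (k : ℕ) (A : Matrix V V ℝ)
    (hA : MatrixOfGraph G A) (hk : k ≤ nullity A) (B : Finset V) (hB : IsZeroForcingSet G ↑B)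
    (hBk : B.card ≤ k) : maxNullity G = k ∧ zeroForcingNumber G = k := by
  have hAB := nullity_le_of_zf G A hA B hB
  have hbd : ∀ l ∈ {k | ∃ A : Matrix V V ℝ, MatrixOfGraph G A ∧ nullity A = k}, l ≤ k := by
    rintro l ⟨A', hA', rfl⟩
    exact (nullity_le_of_zf G A' hA' B hB).trans hBk
  constructor
  · apply le_antisymm
    · exact csSup_le ⟨_, A, hA, rfl⟩ hbd
    · exact hk.trans (le_csSup (s := {k | ∃ A : Matrix V V ℝ, MatrixOfGraph G A ∧ nullity A = k})
        ⟨k, hbd⟩ ⟨A, hA, rfl⟩)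
  · apply le_antisymm
    · exact (Nat.sInf_le (s := {k | ∃ B : Finset V, B.card = k ∧ IsZeroForcingSet G ↑B}) ⟨B, rfl, hB⟩).trans hBk
    · obtain ⟨B', h1, h2⟩ := Nat.sInf_mem
        (s := {k | ∃ B : Finset V, B.card = k ∧ IsZeroForcingSet G ↑B}) ⟨_, B, rfl, hB⟩
      have := nullity_le_of_zf G A hA B' h2
      unfold zeroForcingNumber
      omega

/-- skew circulant matrix -/
def skewH (m : ℕ) : Matrix (Fin (m+3)) (Fin (m+3)) ℝ :=
  fun i j => (if j = i + 1 then 1 else 0) - (if j = i - 1 then 1 else 0)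

theorem skewH_mulVec (m : ℕ) (v : Fin (m+3) → ℝ) (i : Fin (m+3)) :
    (skewH m).mulVec v i = v (i+1) - v (i-1) := by
  simp [skewH, Matrix.mulVec, dotProduct, sub_mul, Finset.sum_sub_distrib]

theorem skewH_antisymm (m : ℕ) (i j : Fin (m+3)) : skewH m j i = - skewH m i j := by
  have h1 : (i = j + 1) ↔ (j = i - 1) := by
    constructor
    · rintro rfl; simp
    · rintro rfl; simp
  have h2 : (i = j - 1) ↔ (j = i + 1) := by
    constructor
    · rintro rfl; simp
    · rintro rfl; simp
  simp [skewH, h1, h2]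

theorem skewH_ne (m : ℕ) (i j : Fin (m+3)) : skewH m i j ≠ 0 ↔ (cycleGraph (m+3)).Adj i j := by
  rw [cycleGraph_adj]
  have h1 : (i - j = 1) ↔ (j = i - 1) := by
    constructor
    · intro h; rw [← h]; simp
    · rintro rfl; simp
  have h2 : (j - i = 1) ↔ (j = i + 1) := by
    constructor
    · intro h; rw [← h]; simp
    · rintro rfl; simp
  rw [h1, h2]
  unfold skewH
  by_cases ha : j = i + 1 <;> by_cases hb : j = i - 1
  · exfalso
    have h3 : (1 : Fin (m+3)) + 1 = 0 := by
      have : i + 1 = i - 1 := by rw [← ha, ← hb]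
      have h4 : i + 1 + 1 = i := by rw [this]; simp
      rw [add_assoc] at h4
      simpa using h4
    have := congrArg Fin.val h3
    rw [Fin.val_add] at this
    simp at this
    have h5 : 1 % (m+3) = 1 := Nat.mod_eq_of_lt (by omega)
    have h6 : 2 % (m+3) = 2 := Nat.mod_eq_of_lt (by omega)
    omega
  · rw [if_pos ha, if_neg hb]; simp [ha]
  · rw [if_neg ha, if_pos hb]; simp [hb]
  · rw [if_neg ha, if_neg hb]; simp [ha, hb]

theorem skewH_rank_le (m : ℕ) : (skewH m).rank + 1 ≤ m + 3 := by
  have h2 := LinearMap.finrank_range_add_finrank_ker (skewH m).mulVecLin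
  rw [Module.finrank_fintype_fun_eq_card, Fintype.card_fin] at h2
  have h3 : 0 < Module.finrank ℝ (LinearMap.ker (skewH m).mulVecLin) := by
    apply Module.finrank_pos_iff_exists_ne_zero.2
    refine ⟨⟨fun _ => 1, ?_⟩, ?_⟩
    · rw [LinearMap.mem_ker]
      funext i
      simp [skewH_mulVec]
    · intro h
      have := congrFun (congrArg Subtype.val h) 0
      simp at this
  unfold Matrix.rank
  omega

theorem par (m : ℕ) (hm : Even (m+3)) (j : Fin (m+3)) : (j+1).val % 2 = (j.val + 1) % 2 := by
  obtain ⟨k, hk⟩ := hm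
  rw [Fin.val_add_one]
  split_ifs with h
  · rw [h]; simp; omega
  · rfl

theorem skewH_rank_le' (m : ℕ) (hm : Even (m+3)) : (skewH m).rank + 2 ≤ m + 3 := by
  have h2 := LinearMap.finrank_range_add_finrank_ker (skewH m).mulVecLin
  rw [Module.finrank_fintype_fun_eq_card, Fintype.card_fin] at h2
  let f : (Fin 2 → ℝ) →ₗ[ℝ] (Fin (m+3) → ℝ) :=
    LinearMap.funLeft ℝ ℝ (fun i : Fin (m+3) => (⟨i.val % 2, Nat.mod_lt _ (by norm_num)⟩ : Fin 2))
  have hf : ∀ c, f c ∈ LinearMap.ker (skewH m).mulVecLin := by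
    intro c
    rw [LinearMap.mem_ker]
    funext i
    have h := par m hm (i-1)
    have h' := par m hm i
    rw [sub_add_cancel] at h
    have h3 : (i+1).val % 2 = (i-1).val % 2 := by omega
    simp only [Matrix.mulVecLin_apply, skewH_mulVec, f, LinearMap.funLeft_apply, h3]
    simp
  have h3 : Module.finrank ℝ (Fin 2 → ℝ) ≤ Module.finrank ℝ (LinearMap.ker (skewH m).mulVecLin) := by
    apply LinearMap.finrank_le_finrank_of_injective (f := f.codRestrict _ hf)
    intro c d h
    have h' : f c = f d := congrArg Subtype.val h
    funext k
    have h4 := congrFun h' ⟨k.val, by omega⟩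
    simp only [f, LinearMap.funLeft_apply] at h4
    have : (⟨k.val % 2, Nat.mod_lt _ (by norm_num)⟩ : Fin 2) = k := by
      apply Fin.ext; simp; omega
    rwa [this] at h4
  rw [Module.finrank_fintype_fun_eq_card, Fintype.card_fin] at h3
  unfold Matrix.rank
  omega

def matA (m n : ℕ) : Matrix (Fin (m+3) × Fin n) (Fin (m+3) × Fin n) ℝ :=
  fun p q => skewH m p.1 q.1 * ((p.2.val : ℝ) - q.2.val)

theorem matA_mem (m n : ℕ) :
    MatrixOfGraph (tensorProd (cycleGraph (m+3)) (⊤ : SimpleGraph (Fin n))) (matA m n) := by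
  constructor
  · ext p q
    simp only [matA, Matrix.transpose_apply]
    rw [skewH_antisymm]
    ring
  · intro p q _
    have : ((p.2.val : ℝ) - q.2.val ≠ 0) ↔ p.2 ≠ q.2 := by
      rw [sub_ne_zero, Ne, Nat.cast_inj, Ne, Fin.ext_iff]
    simp only [matA, tensorProd, top_adj, mul_ne_zero_iff, skewH_ne, this]

theorem rank_add_le'' [Fintype V] (A B : Matrix V V ℝ) : (A + B).rank ≤ A.rank + B.rank := by
  unfold Matrix.rank
  have : LinearMap.range (A + B).mulVecLin ≤
      LinearMap.range A.mulVecLin ⊔ LinearMap.range B.mulVecLin := by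
    rintro _ ⟨x, rfl⟩
    rw [Matrix.mulVecLin_add, LinearMap.add_apply]
    exact Submodule.add_mem_sup ⟨x, rfl⟩ ⟨x, rfl⟩
  exact (Submodule.finrank_mono this).trans (Submodule.finrank_add_le_finrank_add_finrank _ _)

theorem matA_rank (m n : ℕ) : (matA m n).rank ≤ 2 * (skewH m).rank := by
  let P : Matrix (Fin (m+3) × Fin n) (Fin (m+3)) ℝ := fun p k => if p.1 = k then (p.2.val : ℝ) else 0
  let Q : Matrix (Fin (m+3) × Fin n) (Fin (m+3)) ℝ := fun p k => if p.1 = k then 1 else 0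
  have h : matA m n = P * (skewH m) * Q.transpose + (-Q) * (skewH m) * P.transpose := by
    ext p q
    have e1 : (P * (skewH m) * Q.transpose) p q = (p.2.val : ℝ) * skewH m p.1 q.1 := by
      simp only [Matrix.mul_apply, Matrix.transpose_apply]
      simp [P, Q]
    have e2 : ((-Q) * (skewH m) * P.transpose) p q = - (skewH m p.1 q.1 * (q.2.val : ℝ)) := by
      simp only [Matrix.mul_apply, Matrix.transpose_apply, Matrix.neg_apply]
      simp [P, Q]
    rw [Matrix.add_apply, e1, e2, matA]
    ring
  have h1 : (P * (skewH m) * Q.transpose).rank ≤ (skewH m).rank :=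
    (Matrix.rank_mul_le_left _ _).trans (Matrix.rank_mul_le_right _ _)
  have h2 : ((-Q) * (skewH m) * P.transpose).rank ≤ (skewH m).rank :=
    (Matrix.rank_mul_le_left _ _).trans (Matrix.rank_mul_le_right _ _)
  have h3 := rank_add_le'' (P * (skewH m) * Q.transpose) ((-Q) * (skewH m) * P.transpose)
  rw [h]
  omega

theorem matA_nullity (m n r : ℕ) (hr : (skewH m).rank + r ≤ m + 3) :
    (n + 1) * (m+3) + 2 * r ≤ nullity (matA m (n+3)) := by
  have := matA_rank m (n+3)
  unfold nullity
  rw [Fintype.card_prod, Fintype.card_fin, Fintype.card_fin]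
  have e : (m+3) * (n+3) = (n+1) * (m+3) + 2 * (m+3) := by ring
  omega

theorem cyc_adj (m : ℕ) (i j : Fin (m+3)) (h : (cycleGraph (m+3)).Adj i j) :
    i.val + 1 = j.val ∨ j.val + 1 = i.val ∨ (i.val = 0 ∧ j.val = m + 2) ∨
      (j.val = 0 ∧ i.val = m+2) := by
  rw [cycleGraph_adj] at h
  rcases h with h | h
  · have : i = j + 1 := by rw [← h]; simp
    have h2 := Fin.val_add_one j
    rw [← this] at h2
    split_ifs at h2 with h3
    · right; right; left; exact ⟨h2, by rw [h3]; simp⟩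
    · omega
  · have : j = i + 1 := by rw [← h]; simp
    have h2 := Fin.val_add_one i
    rw [← this] at h2
    split_ifs at h2 with h3
    · right; right; right; exact ⟨h2, by rw [h3]; simp⟩
    · omega

theorem adj_cyc (m : ℕ) (i j : Fin (m+3)) (h : i.val + 1 = j.val ∨ (i.val = m + 2 ∧ j.val = 0)) :
    (cycleGraph (m+3)).Adj i j := by
  rw [cycleGraph_adj]
  right
  have : j = i + 1 := by
    apply Fin.ext
    rw [Fin.val_add_one]
    split_ifs with h3
    · have : i.val = m + 2 := by rw [h3]; simp
      have := j.isLt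
      omega
    · have : i.val ≠ m + 2 := fun h4 => h3 (Fin.ext (by simpa using h4))
      omega
  rw [this]; simp

/-- Force from `(i,a)` to `(j,c)`. -/
theorem force' (m n : ℕ) (B : Set (Fin (m+3) × Fin n)) (i j : Fin (m+3)) (a c : Fin n)
    (hij : i.val + 1 = j.val ∨ (i.val = m + 2 ∧ j.val = 0)) (hac : a ≠ c)
    (h0 : ZFClosure (tensorProd (cycleGraph (m+3)) (⊤ : SimpleGraph (Fin n))) B (i,a))
    (h1 : ∀ k : Fin (m+3), ∀ b, (k.val + 1 = i.val ∨ (k.val = m + 2 ∧ i.val = 0)) → b ≠ a →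
      ZFClosure (tensorProd (cycleGraph (m+3)) (⊤ : SimpleGraph (Fin n))) B (k,b))
    (h2 : ∀ b, b ≠ a → b ≠ c →
      ZFClosure (tensorProd (cycleGraph (m+3)) (⊤ : SimpleGraph (Fin n))) B (j,b)) :
    ZFClosure (tensorProd (cycleGraph (m+3)) (⊤ : SimpleGraph (Fin n))) B (j,c) := by
  refine ZFClosure.force (i,a) (j,c) h0 ⟨adj_cyc m i j hij, by simpa using hac⟩ ?_
  rintro ⟨k, b⟩ ⟨hk, hb⟩ hne
  have hb' : b ≠ a := by
    intro h; subst h; simp at hb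
  by_cases hkj : k = j
  · subst hkj
    exact h2 b hb' (fun h => hne (by rw [h]))
  · have := cyc_adj m i k hk
    have hkj' : k.val ≠ j.val := fun h => hkj (Fin.ext h)
    apply h1 k b _ hb'
    omega

theorem two_cols (m n : ℕ) (hn : 3 ≤ n) (B : Set (Fin (m+3) × Fin n))
    (hB : ∀ i : Fin (m+3), ∀ b : Fin n, b.val ≠ 2 → b.val ≠ i.val % 2 → (i,b) ∈ B)
    (h01 : ∀ i : Fin (m+3), ∀ b : Fin n, i.val ≤ 1 →
      ZFClosure (tensorProd (cycleGraph (m+3)) (⊤ : SimpleGraph (Fin n))) B (i,b)) :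
    IsZeroForcingSet (tensorProd (cycleGraph (m+3)) (⊤ : SimpleGraph (Fin n))) B := by
  have key : ∀ k : ℕ, ∀ i : Fin (m+3), ∀ b : Fin n, i.val ≤ k + 1 →
      ZFClosure (tensorProd (cycleGraph (m+3)) (⊤ : SimpleGraph (Fin n))) B (i,b) := by
    intro k
    induction k with
    | zero => intro i b h; exact h01 i b h
    | succ k ih =>
      intro i b h
      by_cases hi : i.val ≤ k + 1
      · exact ih i b hi
      have hi' : i.val = k + 2 := by omega
      by_cases hb2 : b.val = 2
      · refine force' m n B ⟨k+1, by omega⟩ i ⟨i.val % 2, by omega⟩ b (by left; simp; omega)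
          (fun h => by have := congrArg Fin.val h; simp at this; omega) (ih _ _ (by simp)) ?_ ?_
        · intro k' b' hk' _
          apply ih
          simp at hk'
          omega
        · intro b' h1 h2
          apply ZFClosure.init
          apply hB
          · intro h3; apply h2; apply Fin.ext; omega
          · intro h3; apply h1; apply Fin.ext; simpa using h3
      · by_cases hb3 : b.val = i.val % 2
        · refine force' m n B ⟨k+1, by omega⟩ i ⟨2, by omega⟩ b (by left; simp; omega)
            (fun h => by have := congrArg Fin.val h; simp at this; omega) (ih _ _ (by simp)) ?_ ?_
          · intro k' b' hk' _
            apply ih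
            simp at hk'
            omega
          · intro b' h1 h2
            apply ZFClosure.init
            apply hB
            · intro h3; apply h1; apply Fin.ext; simpa using h3
            · intro h3; apply h2; apply Fin.ext; omega
        · exact ZFClosure.init _ (hB i b hb2 hb3)
  rintro ⟨i, b⟩
  exact key i.val i b (by omega)

theorem even_case (m n : ℕ) :
    ∃ B : Finset (Fin (m+3) × Fin (n+3)), B.card ≤ (n+1) * (m+3) + 4 ∧
      IsZeroForcingSet (tensorProd (cycleGraph (m+3)) (⊤ : SimpleGraph (Fin (n+3)))) ↑B := by
  let f : Fin (m+1) → Fin (m+3) × Fin (n+3) := fun k => (⟨k.val+2, by omega⟩, ⟨k.val % 2, by omega⟩)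
  let g : Fin (m+1) → Fin (m+3) × Fin (n+3) := fun k => (⟨k.val+2, by omega⟩, ⟨2, by omega⟩)
  have hf : Function.Injective f := fun a b h => by
    simp [f] at h; exact Fin.ext h.1
  have hg : Function.Injective g := fun a b h => by
    simp [g] at h; exact Fin.ext h
  have hd : Disjoint (Finset.univ.image f) (Finset.univ.image g) := by
    rw [Finset.disjoint_left]
    intro p hp hq
    simp only [Finset.mem_image, Finset.mem_univ, true_and] at hp hq
    obtain ⟨a, rfl⟩ := hp
    obtain ⟨b, h⟩ := hq
    simp [f, g] at h
    omega
  refine ⟨(Finset.univ.image f ∪ Finset.univ.image g)ᶜ, ?_, ?_⟩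
  · rw [Finset.card_compl, Finset.card_union_of_disjoint hd, Finset.card_image_of_injective _ hf,
      Finset.card_image_of_injective _ hg]
    simp only [Fintype.card_prod, Fintype.card_fin, Finset.card_univ]
    have e : (m+3) * (n+3) = (n+1) * (m+3) + 2 * (m+3) := by ring
    omega
  · apply two_cols m (n+3) (by omega)
    · intro i b h1 h2
      simp only [Finset.coe_compl, Set.mem_compl_iff, Finset.mem_coe, Finset.mem_union,
        Finset.mem_image, Finset.mem_univ, true_and, not_or, not_exists]
      constructor
      · intro a h
        simp only [f, Prod.mk.injEq, Fin.ext_iff] at h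
        omega
      · intro a h
        simp only [g, Prod.mk.injEq, Fin.ext_iff] at h
        omega
    · intro i b h
      apply ZFClosure.init
      simp only [Finset.coe_compl, Set.mem_compl_iff, Finset.mem_coe, Finset.mem_union,
        Finset.mem_image, Finset.mem_univ, true_and, not_or, not_exists]
      constructor
      · intro a h
        simp only [f, Prod.mk.injEq, Fin.ext_iff] at h
        omega
      · intro a h
        simp only [g, Prod.mk.injEq, Fin.ext_iff] at h
        omega

theorem odd_case (m n : ℕ) (hm : Odd (m+3)) :
    ∃ B : Finset (Fin (m+3) × Fin (n+3)), B.card ≤ (n+1) * (m+3) + 2 ∧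
      IsZeroForcingSet (tensorProd (cycleGraph (m+3)) (⊤ : SimpleGraph (Fin (n+3)))) ↑B := by
  let f : Fin (m+3) → Fin (m+3) × Fin (n+3) := fun k => (k, ⟨k.val % 2, by omega⟩)
  let g : Fin (m+1) → Fin (m+3) × Fin (n+3) := fun k => (⟨k.val+2, by omega⟩, ⟨2, by omega⟩)
  have hf : Function.Injective f := fun a b h => by
    simp [f] at h; exact h.1
  have hg : Function.Injective g := fun a b h => by
    simp [g] at h; exact Fin.ext h
  have hd : Disjoint (Finset.univ.image f) (Finset.univ.image g) := by
    rw [Finset.disjoint_left]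
    intro p hp hq
    simp only [Finset.mem_image, Finset.mem_univ, true_and] at hp hq
    obtain ⟨a, rfl⟩ := hp
    obtain ⟨b, h⟩ := hq
    simp [f, g] at h
    omega
  refine ⟨(Finset.univ.image f ∪ Finset.univ.image g)ᶜ, ?_, ?_⟩
  · rw [Finset.card_compl, Finset.card_union_of_disjoint hd, Finset.card_image_of_injective _ hf,
      Finset.card_image_of_injective _ hg]
    simp only [Fintype.card_prod, Fintype.card_fin, Finset.card_univ]
    have e : (m+3) * (n+3) = (n+1) * (m+3) + 2 * (m+3) := by ring
    omega
  have hB : ∀ i : Fin (m+3), ∀ b : Fin (n+3), (b.val ≠ 2 ∨ i.val < 2) → b.val ≠ i.val % 2 →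
      (i,b) ∈ (((Finset.univ.image f ∪ Finset.univ.image g)ᶜ : Finset _) :
        Set (Fin (m+3) × Fin (n+3))) := by
    intro i b h1 h2
    simp only [Finset.coe_compl, Set.mem_compl_iff, Finset.mem_coe, Finset.mem_union,
      Finset.mem_image, Finset.mem_univ, true_and, not_or, not_exists]
    constructor
    · intro a h
      simp only [f, Prod.mk.injEq, Fin.ext_iff] at h
      obtain ⟨h3, h4⟩ := h
      rw [h3] at h4
      omega
    · intro a h
      simp only [g, Prod.mk.injEq, Fin.ext_iff] at h
      omega
  generalize (((Finset.univ.image f ∪ Finset.univ.image g)ᶜ : Finset _) :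
        Set (Fin (m+3) × Fin (n+3))) = B at hB
  have key : ∀ k : ℕ, ∀ i : Fin (m+3), ∀ b : Fin (n+3), i.val ≤ k + 1 → b.val ≠ i.val % 2 →
      ZFClosure (tensorProd (cycleGraph (m+3)) (⊤ : SimpleGraph (Fin (n+3)))) B (i,b) := by
    intro k
    induction k with
    | zero => intro i b h hb; exact ZFClosure.init _ (hB i b (by omega) hb)
    | succ k ih =>
      intro i b h hb
      by_cases hi : i.val ≤ k + 1
      · exact ih i b hi hb
      have hi' : i.val = k + 2 := by omega
      by_cases hb2 : b.val = 2
      · refine force' m (n+3) B ⟨k+1, by omega⟩ i ⟨k % 2, by omega⟩ b (by left; simp; omega)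
          (fun h => by have := congrArg Fin.val h; simp at this; omega)
          (ih _ _ (by simp) (by simp; omega)) ?_ ?_
        · intro k' b' hk' hb'
          have hb'' : b'.val ≠ k % 2 := fun h => hb' (Fin.ext h)
          simp at hk'
          apply ih
          · omega
          · omega
        · intro b' h1 h2
          have h1' : b'.val ≠ k % 2 := fun h => h1 (Fin.ext h)
          have h2' : b'.val ≠ b.val := fun h => h2 (Fin.ext h)
          apply ZFClosure.init
          apply hB
          · omega
          · omega
      · exact ZFClosure.init _ (hB i b (by omega) hb)
  have key' : ∀ i : Fin (m+3), ∀ b : Fin (n+3), b.val ≠ i.val % 2 →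
      ZFClosure (tensorProd (cycleGraph (m+3)) (⊤ : SimpleGraph (Fin (n+3)))) B (i,b) :=
    fun i b hb => key i.val i b (by omega) hb
  have hm' : (m + 3) % 2 = 1 := Nat.odd_iff.1 hm
  have z0 : ∀ i : Fin (m+3), ∀ b : Fin (n+3), i.val = 0 →
      ZFClosure (tensorProd (cycleGraph (m+3)) (⊤ : SimpleGraph (Fin (n+3)))) B (i,b) := by
    intro i b hi
    by_cases hb : b.val = i.val % 2
    · refine force' m (n+3) B ⟨m+2, by omega⟩ i ⟨1, by omega⟩ b (Or.inr ⟨rfl, hi⟩)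
          (fun h => by have := congrArg Fin.val h; simp at this; omega)
          (key' _ _ (by simp; omega)) ?_ ?_
      · intro k' b' hk' hb'
        have hb'' : b'.val ≠ 1 := fun h => hb' (Fin.ext h)
        simp at hk'
        apply key'
        omega
      · intro b' h1 h2
        have h2' : b'.val ≠ b.val := fun h => h2 (Fin.ext h)
        apply key'
        omega
    · exact key' i b hb
  have z1 : ∀ i : Fin (m+3), ∀ b : Fin (n+3), i.val = 1 →
      ZFClosure (tensorProd (cycleGraph (m+3)) (⊤ : SimpleGraph (Fin (n+3)))) B (i,b) := by
    intro i b hi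
    by_cases hb : b.val = i.val % 2
    · refine force' m (n+3) B ⟨0, by omega⟩ i ⟨0, by omega⟩ b (by left; simp; omega)
          (fun h => by have := congrArg Fin.val h; simp at this; omega)
          (z0 _ _ (by simp)) ?_ ?_
      · intro k' b' hk' hb'
        have hb'' : b'.val ≠ 0 := fun h => hb' (Fin.ext h)
        simp at hk'
        apply key'
        omega
      · intro b' h1 h2
        have h2' : b'.val ≠ b.val := fun h => h2 (Fin.ext h)
        apply key'
        omega
    · exact key' i b hb
  apply two_cols m (n+3) (by omega)
  · intro i b h1 h2
    exact hB i b (Or.inl h1) h2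
  · intro i b h
    by_cases h0 : i.val = 0
    · exact z0 i b h0
    · exact z1 i b (by omega)

end helpers

/-- For `n, t ≥ 3`, `M(C_t × K_n) = Z(C_t × K_n)`, which equals
`(n−2)t + 2` if `t` is odd and `(n−2)t + 4` if `t` is even. -/
theorem stmt5 (t n : ℕ) (ht : 3 ≤ t) (hn : 3 ≤ n) :
    (Odd t →
      maxNullity (tensorProd (cycleGraph t) (⊤ : SimpleGraph (Fin n))) = (n - 2) * t + 2 ∧
      zeroForcingNumber (tensorProd (cycleGraph t) (⊤ : SimpleGraph (Fin n))) = (n - 2) * t + 2) ∧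
    (Even t →
      maxNullity (tensorProd (cycleGraph t) (⊤ : SimpleGraph (Fin n))) = (n - 2) * t + 4 ∧
      zeroForcingNumber (tensorProd (cycleGraph t) (⊤ : SimpleGraph (Fin n))) = (n - 2) * t + 4) := by
  obtain ⟨m, rfl⟩ : ∃ m, t = m + 3 := ⟨t - 3, by omega⟩
  obtain ⟨k, rfl⟩ : ∃ k, n = k + 3 := ⟨n - 3, by omega⟩
  have e : k + 3 - 2 = k + 1 := by omega
  rw [e]
  constructor
  · intro h
    obtain ⟨B, h1, h2⟩ := odd_case m k h
    exact sandwich _ _ (matA m (k+3)) (matA_mem m (k+3))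
      (matA_nullity m k 1 (skewH_rank_le m)) B h2 h1
  · intro h
    obtain ⟨B, h1, h2⟩ := even_case m k
    exact sandwich _ _ (matA m (k+3)) (matA_mem m (k+3))
      (matA_nullity m k 2 (skewH_rank_le' m h)) B h2 h1

end PaperPD
end

section
/- Let G be a finite simple graph that has at least one edge. Then ⌈Z(G)/Δ(G)⌉ ≤ γ_P(G), where Z(G) is the zero forcing number, Δ(G) the maximum degree, and γ_P(G) the power domination number of G. -/
namespace PaperPD

open SimpleGraph

variable {V α β : Type*}

theorem ZFClosure.trans' {V : Type*} {G : SimpleGraph V} {B C : Set V}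
    (h : ∀ v ∈ C, ZFClosure G B v) {v : V} (hv : ZFClosure G C v) : ZFClosure G B v := by
  induction hv with
  | init v hv => exact h v hv
  | force u w _ huw _ ih1 ih2 => exact ZFClosure.force u w ih1 huw ih2

theorem deg_le_maxDeg {V : Type*} [Fintype V] (G : SimpleGraph V) (v : V) :
    deg G v ≤ maxDeg G :=
  Finset.le_sup (f := fun v => deg G v) (Finset.mem_univ v)

theorem maxDeg_pos {V : Type*} [Fintype V] (G : SimpleGraph V) (hE : ∃ u v, G.Adj u v) :
    0 < maxDeg G := by
  obtain ⟨u, v, h⟩ := hE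
  refine lt_of_lt_of_le ?_ (deg_le_maxDeg G u)
  exact (Set.ncard_pos (Set.toFinite _)).2 ⟨v, h⟩

theorem local_set {V : Type*} [Fintype V] (G : SimpleGraph V) (hE : ∃ u v, G.Adj u v) (v : V) :
    ∃ T : Finset V, T.card ≤ maxDeg G ∧ v ∈ T ∧
      ∃ w, ∀ x, G.Adj v x → x ≠ w → x ∈ T := by
  classical
  by_cases hv : ∃ w, G.Adj v w
  · obtain ⟨w, hw⟩ := hv
    refine ⟨insert v ((G.neighborFinset v).erase w), ?_, by simp, w, ?_⟩
    · refine le_trans ?_ (deg_le_maxDeg G v)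
      refine (Finset.card_insert_le _ _).trans ?_
      have hm : w ∈ G.neighborFinset v := by simpa using hw
      rw [Finset.card_erase_add_one hm]
      unfold deg
      rw [Set.ncard_eq_toFinset_card']
      rfl
    · intro x hx hxw
      simp [hx, hxw]
  · refine ⟨{v}, ?_, by simp, v, ?_⟩
    · rw [Finset.card_singleton]
      exact maxDeg_pos G hE
    · intro x hx
      exact absurd ⟨x, hx⟩ hv

theorem zf_le {V : Type*} [Fintype V] (G : SimpleGraph V) (hE : ∃ u v, G.Adj u v) :
    zeroForcingNumber G ≤ powerDominationNumber G * maxDeg G := by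
  classical
  have hne : {k | ∃ S : Finset V, S.card = k ∧ IsPowerDominatingSet G ↑S}.Nonempty :=
    ⟨_, Finset.univ, rfl, fun v => ZFClosure.init v (Or.inl (by simp))⟩
  obtain ⟨S, hS, hP⟩ := Nat.sInf_mem hne
  choose T hT hvT w hw using local_set G hE
  have hB : IsZeroForcingSet G (↑(S.biUnion T) : Set V) := by
    have hin : ∀ v ∈ S, ∀ x ∈ T v, ZFClosure G (↑(S.biUnion T) : Set V) x := fun v hv x hx =>
      ZFClosure.init x (by
        rw [Finset.mem_coe, Finset.mem_biUnion]
        exact ⟨v, hv, hx⟩)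
    intro v
    refine ZFClosure.trans' ?_ (hP v)
    rintro x (hx | ⟨u, hu, hux⟩)
    · exact hin x hx x (hvT x)
    · by_cases hxw : x = w u
      · refine ZFClosure.force u x (hin u hu u (hvT u)) hux ?_
        intro y hy hyx
        exact hin u hu y (hw u y hy (hxw ▸ hyx))
      · exact hin u hu x (hw u x hux hxw)
  have h1 : zeroForcingNumber G ≤ (S.biUnion T).card := Nat.sInf_le ⟨_, rfl, hB⟩
  have h2 : (S.biUnion T).card ≤ S.card * maxDeg G :=
    Finset.card_biUnion_le_card_mul _ _ _ (fun v _ => hT v)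
  rw [hS] at h2
  exact h1.trans h2

/-- If `G` has at least one edge, then `⌈Z(G)/Δ(G)⌉ ≤ γ_P(G)`. -/
theorem stmt9 {V : Type*} [Fintype V] (G : SimpleGraph V) (hE : ∃ u v, G.Adj u v) :
    ⌈(zeroForcingNumber G : ℚ) / (maxDeg G : ℚ)⌉ ≤ (powerDominationNumber G : ℤ) := by
  have hpos : (0 : ℚ) < maxDeg G := by exact_mod_cast maxDeg_pos G hE
  rw [Int.ceil_le, div_le_iff₀ hpos]
  exact_mod_cast zf_le G hE

end PaperPD
end

section
/- Let n ≥ 3 and t ≥ 2. Then γ_P(P_t × K_n) ≤ ⌈t/2⌉ if t ≢ 2 (mod 4), and γ_P(P_t × K_n) ≤ t/2 + 1 if t ≡ 2 (mod 4). -/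
namespace PaperPD

open SimpleGraph

variable {V α β : Type*}

def selCol (t i : ℕ) : Prop :=
  i % 4 = 1 ∨ i % 4 = 2 ∨ (i + 2 = t ∧ (t % 4 = 1 ∨ t % 4 = 2))

def selAt (t j : ℕ) : ℕ := if 2 * j + 1 - j % 2 < t then 2 * j + 1 - j % 2 else t - 2

lemma selAt_mem (t i m : ℕ) (ht : 2 ≤ t) (hi : i < t)
    (hm : (t % 4 ≠ 2 → m = (t + 1) / 2) ∧ (t % 4 = 2 → m = t / 2 + 1))
    (h : selCol t i) : ∃ j < m, selAt t j = i := by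
  unfold selCol at h
  unfold selAt
  rcases h with h | h | h
  · refine ⟨i / 2, by omega, ?_⟩
    split_ifs <;> omega
  · refine ⟨i / 2, by omega, ?_⟩
    split_ifs <;> omega
  · refine ⟨m - 1, by omega, ?_⟩
    split_ifs <;> omega

lemma exists_sel_adj (t i : ℕ) (ht : 2 ≤ t) (hi : i < t) :
    ∃ u < t, selCol t u ∧ (u + 1 = i ∨ i + 1 = u) := by
  unfold selCol
  by_cases h : i + 1 < t ∧ (i % 4 = 0 ∨ i % 4 = 1 ∨ i + 3 = t ∧ (t % 4 = 1 ∨ t % 4 = 2))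
  · exact ⟨i + 1, by omega, by omega, by omega⟩
  · exact ⟨i - 1, by omega, by omega, by omega⟩

lemma exists_sel_force (t i : ℕ) (ht : 2 ≤ t) (hi : i < t) (hs : ¬ selCol t i) :
    ∃ u < t, selCol t u ∧ (u + 1 = i ∨ i + 1 = u) ∧
      ∀ k < t, (u + 1 = k ∨ k + 1 = u) → k ≠ i → selCol t k := by
  unfold selCol at *
  by_cases h : i + 1 < t ∧ i % 4 = 0
  · exact ⟨i + 1, by omega, by omega, by omega, by intros; omega⟩
  · exact ⟨i - 1, by omega, by omega, by omega, by intros; omega⟩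

lemma key (n t m : ℕ) (hn : 3 ≤ n) (ht : 2 ≤ t)
    (hm : (t % 4 ≠ 2 → m = (t + 1) / 2) ∧ (t % 4 = 2 → m = t / 2 + 1)) :
    powerDominationNumber (tensorProd (pathGraph t) (⊤ : SimpleGraph (Fin n))) ≤ m := by
  classical
  have hlt : ∀ j, selAt t j < t := by
    intro j; unfold selAt; split_ifs <;> omega
  let z : Fin n := ⟨0, by omega⟩
  let o : Fin n := ⟨1, by omega⟩
  have hoz : o ≠ z := by simp [o, z]
  let S : Finset (Fin t × Fin n) :=
    (Finset.range m).image fun j => ((⟨selAt t j, hlt j⟩ : Fin t), z)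
  have hcard : S.card ≤ m := by
    simpa using (Finset.card_image_le (s := Finset.range m)
      (f := fun j => ((⟨selAt t j, hlt j⟩ : Fin t), z)))
  refine le_trans (Nat.sInf_le ⟨S, rfl, ?_⟩) hcard
  have hS : ∀ i : Fin t, selCol t i → (i, z) ∈ S := by
    intro i hi
    obtain ⟨j, hj, e⟩ := selAt_mem t i m ht i.2 hm hi
    exact Finset.mem_image.2 ⟨j, Finset.mem_range.2 hj, by simp [e]⟩
  have hnz : ∀ (i : Fin t) (b : Fin n), b ≠ z →
      ZFClosure (tensorProd (pathGraph t) (⊤ : SimpleGraph (Fin n)))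
        (closedNbhd (tensorProd (pathGraph t) ⊤) ↑S) (i, b) := by
    intro i b hb
    obtain ⟨u, hu, hs, ha⟩ := exists_sel_adj t i ht i.2
    refine .init _ (Or.inr ⟨(⟨u, hu⟩, z), hS ⟨u, hu⟩ hs, ?_, ?_⟩)
    · exact pathGraph_adj.2 (by simpa using ha)
    · simpa using hb.symm
  have hfull : ∀ (i : Fin t) (b : Fin n), selCol t i →
      ZFClosure (tensorProd (pathGraph t) (⊤ : SimpleGraph (Fin n)))
        (closedNbhd (tensorProd (pathGraph t) ⊤) ↑S) (i, b) := by
    intro i b hi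
    by_cases hb : b = z
    · subst hb; exact .init _ (Or.inl (hS i hi))
    · exact hnz i b hb
  rintro ⟨i, b⟩
  by_cases hi : selCol t i
  · exact hfull i b hi
  by_cases hb : b = z
  swap
  · exact hnz i b hb
  subst hb
  obtain ⟨u, hu, hs, ha, hk⟩ := exists_sel_force t i ht i.2 hi
  refine .force (⟨u, hu⟩, o) _ (hnz _ _ hoz) ⟨pathGraph_adj.2 (by simpa using ha), ?_⟩ ?_
  · simpa using hoz
  · rintro ⟨k, c⟩ ⟨h1, h2⟩ hne
    by_cases hc : c = z
    · subst hc
      have hki : k ≠ i := fun h => hne (by rw [h])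
      have h1' := pathGraph_adj.1 h1
      exact hfull k _ (hk k k.2 (by simpa using h1') (fun h => hki (Fin.ext h)))
    · exact hnz k c hc

/-- For `n ≥ 3` and `t ≥ 2`, `γ_P(P_t × K_n) ≤ ⌈t/2⌉` if
`t ≢ 2 (mod 4)`, and `γ_P(P_t × K_n) ≤ t/2 + 1` if `t ≡ 2 (mod 4)`. -/
theorem stmt11 (n t : ℕ) (hn : 3 ≤ n) (ht : 2 ≤ t) :
    (t % 4 ≠ 2 →
      powerDominationNumber (tensorProd (pathGraph t) (⊤ : SimpleGraph (Fin n))) ≤ (t + 1) / 2) ∧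
    (t % 4 = 2 →
      powerDominationNumber (tensorProd (pathGraph t) (⊤ : SimpleGraph (Fin n))) ≤ t / 2 + 1) := by
  exact ⟨fun h => key n t _ hn ht ⟨fun _ => rfl, fun h2 => absurd h2 h⟩,
    fun h => key n t _ hn ht ⟨fun h2 => absurd h h2, fun _ => rfl⟩⟩

end PaperPD
end

section
/- Let n ≥ 3 and t ≥ 3. Then γ_P(C_t × K_n) ≤ ⌈t/2⌉ if t ≢ 2 (mod 4), and γ_P(C_t × K_n) ≤ t/2 + 1 if t ≡ 2 (mod 4). -/
namespace PaperPD

open SimpleGraph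

variable {V α β : Type*}

theorem cyc_adj_iff (t : ℕ) (ht : 3 ≤ t) (u v : Fin t) : (cycleGraph t).Adj u v ↔
    (u.val + 1 = v.val ∨ v.val + 1 = u.val ∨ (u.val = 0 ∧ v.val + 1 = t) ∨
      (v.val = 0 ∧ u.val + 1 = t)) := by
  rw [cycleGraph_adj']
  have hu := u.isLt
  have hv := v.isLt
  have key : ∀ a b : Fin t, (a - b).val = if b.val ≤ a.val then a.val - b.val
      else t + a.val - b.val := by
    intro a b
    split_ifs with h
    · exact Fin.coe_sub_iff_le.2 h
    · exact Fin.coe_sub_iff_lt.2 (by omega)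
  rw [key u v, key v u]
  split_ifs <;> omega

theorem cyc_full (n t : ℕ) (hn : 3 ≤ n) (ht : 3 ≤ t) (S : Set (Fin t × Fin n)) (i j : Fin t)
    (z : Fin n) (hij : (cycleGraph t).Adj i j) (hi : (i, z) ∈ S) (hj : (j, z) ∈ S) (a : Fin n) :
    ZFClosure (tensorProd (cycleGraph t) (⊤ : SimpleGraph (Fin n)))
      (closedNbhd (tensorProd (cycleGraph t) (⊤ : SimpleGraph (Fin n))) S) (i, a) := by
  refine ZFClosure.init _ ?_
  by_cases h : a = z
  · subst h; exact Or.inl hi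
  · exact Or.inr ⟨_, hj, hij.symm, fun h' => h h'.symm⟩

theorem cyc_next (n t : ℕ) (hn : 3 ≤ n) (ht : 3 ≤ t) (S : Set (Fin t × Fin n)) (i j k : Fin t)
    (z : Fin n) (hij : (cycleGraph t).Adj i j) (hi : (i, z) ∈ S) (hj : (j, z) ∈ S)
    (hik : (cycleGraph t).Adj i k) (a : Fin n) :
    ZFClosure (tensorProd (cycleGraph t) (⊤ : SimpleGraph (Fin n)))
      (closedNbhd (tensorProd (cycleGraph t) (⊤ : SimpleGraph (Fin n))) S) (k, a) := by
  by_cases hkj : k = j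
  · subst hkj
    exact cyc_full n t hn ht S k i z hij.symm hj hi a
  have hne : ∀ b, b ≠ z → ∀ x, (cycleGraph t).Adj i x →
      ZFClosure (tensorProd (cycleGraph t) (⊤ : SimpleGraph (Fin n)))
      (closedNbhd (tensorProd (cycleGraph t) (⊤ : SimpleGraph (Fin n))) S) (x, b) := by
    intro b hb x hx
    exact ZFClosure.init _ (Or.inr ⟨_, hi, hx, fun h' => hb h'.symm⟩)
  by_cases h : a = z
  · subst h
    haveI : Nontrivial (Fin n) := Fin.nontrivial_iff_two_le.2 (by omega)
    obtain ⟨o, ho⟩ := exists_ne a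
    refine ZFClosure.force (i, o) (k, a) (cyc_full n t hn ht S i j a hij hi hj o) ⟨hik, ho⟩ ?_
    rintro ⟨x, b⟩ ⟨hx, hb⟩ hxk
    by_cases hba : b = a
    · subst hba
      have : x = j := by
        have hx' : x ≠ k := fun h => hxk (by rw [h])
        simp only at hx
        rw [cyc_adj_iff t ht] at hx hij hik
        rw [Ne, Fin.ext_iff] at hx'
        rw [Fin.ext_iff] at hkj ⊢
        have := x.isLt
        have := k.isLt
        have := j.isLt
        have := i.isLt
        omega
      subst this
      exact cyc_full n t hn ht S x i b hij.symm hj hi b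
    · exact hne b hba x hx
  · exact hne a h k hik

theorem cyc_main (n t : ℕ) (hn : 3 ≤ n) (ht : 3 ≤ t) (B : ℕ) (hB : (t + 1) / 2 ≤ B)
    (hB2 : t % 4 = 2 → t / 2 + 1 ≤ B) :
    powerDominationNumber (tensorProd (cycleGraph t) (⊤ : SimpleGraph (Fin n))) ≤ B := by
  classical
  let z : Fin n := ⟨0, by omega⟩
  let D : Finset (Fin t) := Finset.univ.filter
    (fun i => i.val % 4 = 1 ∨ i.val % 4 = 2 ∨ i.val + 2 = t)
  let S : Finset (Fin t × Fin n) := D.image (fun i => (i, z))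
  have hcard : S.card ≤ B := by
    refine Finset.card_image_le.trans ?_
    rw [← Finset.card_range B]
    refine Finset.card_le_card_of_injOn
      (fun i => if i.val % 4 = 1 ∨ i.val % 4 = 2 then i.val / 2 else t / 2) ?_ ?_
    · intro i hi
      have h1 : i.val % 4 = 1 ∨ i.val % 4 = 2 ∨ i.val + 2 = t := by simpa [D] using hi
      have := i.isLt
      simp only [Finset.coe_range, Set.mem_Iio]
      split_ifs <;> omega
    · intro i hi j hj hij
      have h1 : i.val % 4 = 1 ∨ i.val % 4 = 2 ∨ i.val + 2 = t := by simpa [D] using hi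
      have h2 : j.val % 4 = 1 ∨ j.val % 4 = 2 ∨ j.val + 2 = t := by simpa [D] using hj
      have := i.isLt
      have := j.isLt
      rw [Fin.ext_iff]
      simp only at hij
      split_ifs at hij <;> omega
  refine le_trans (Nat.sInf_le ⟨S, rfl, ?_⟩) hcard
  have hS : ∀ i (hi : i < t), (i % 4 = 1 ∨ i % 4 = 2 ∨ i + 2 = t) →
      ((⟨i, hi⟩ : Fin t), z) ∈ (S : Set (Fin t × Fin n)) := by
    intro i hi h
    simp [S, D, h]
  have full : ∀ (i j : ℕ) (hi : i < t) (hj : j < t), (i + 1 = j ∨ j + 1 = i) →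
      (i % 4 = 1 ∨ i % 4 = 2 ∨ i + 2 = t) → (j % 4 = 1 ∨ j % 4 = 2 ∨ j + 2 = t) → ∀ a,
      ZFClosure (tensorProd (cycleGraph t) (⊤ : SimpleGraph (Fin n)))
      (closedNbhd (tensorProd (cycleGraph t) (⊤ : SimpleGraph (Fin n))) S) (⟨i, hi⟩, a) := by
    intro i j hi hj h h1 h2 a
    refine cyc_full n t hn ht S _ ⟨j, hj⟩ z ?_ (hS i hi h1) (hS j hj h2) a
    rw [cyc_adj_iff t ht]
    simp only
    omega
  have next : ∀ (k i j : ℕ) (hk : k < t) (hi : i < t) (hj : j < t), (i + 1 = j ∨ j + 1 = i) →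
      (i + 1 = k ∨ k + 1 = i) →
      (i % 4 = 1 ∨ i % 4 = 2 ∨ i + 2 = t) → (j % 4 = 1 ∨ j % 4 = 2 ∨ j + 2 = t) → ∀ a,
      ZFClosure (tensorProd (cycleGraph t) (⊤ : SimpleGraph (Fin n)))
      (closedNbhd (tensorProd (cycleGraph t) (⊤ : SimpleGraph (Fin n))) S) (⟨k, hk⟩, a) := by
    intro k i j hk hi hj h h' h1 h2 a
    refine cyc_next n t hn ht S ⟨i, hi⟩ ⟨j, hj⟩ _ z ?_ (hS i hi h1) (hS j hj h2) ?_ a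
    all_goals
      rw [cyc_adj_iff t ht]
      simp only
      omega
  rintro ⟨⟨v, hv⟩, a⟩
  have h4 : v % 4 = 0 ∨ v % 4 = 1 ∨ v % 4 = 2 ∨ v % 4 = 3 := by omega
  rcases h4 with h | h | h | h
  · by_cases h1 : v + 2 < t
    · exact next v (v + 1) (v + 2) hv (by omega) (by omega) (by omega) (by omega) (by omega)
        (by omega) a
    · by_cases h2 : v + 2 = t
      · exact full v (v + 1) hv (by omega) (by omega) (by omega) (by omega) a
      · exact next v (v - 1) (v - 2) hv (by omega) (by omega) (by omega) (by omega) (by omega)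
          (by omega) a
  · by_cases h1 : v + 1 < t
    · exact full v (v + 1) hv (by omega) (by omega) (by omega) (by omega) a
    · exact full v (v - 1) hv (by omega) (by omega) (by omega) (by omega) a
  · exact full v (v - 1) hv (by omega) (by omega) (by omega) (by omega) a
  · exact next v (v - 1) (v - 2) hv (by omega) (by omega) (by omega) (by omega) (by omega)
      (by omega) a

/-- For `n ≥ 3` and `t ≥ 3`, `γ_P(C_t × K_n) ≤ ⌈t/2⌉` if
`t ≢ 2 (mod 4)`, and `γ_P(C_t × K_n) ≤ t/2 + 1` if `t ≡ 2 (mod 4)`. -/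
theorem stmt12 (n t : ℕ) (hn : 3 ≤ n) (ht : 3 ≤ t) :
    (t % 4 ≠ 2 →
      powerDominationNumber (tensorProd (cycleGraph t) (⊤ : SimpleGraph (Fin n))) ≤ (t + 1) / 2) ∧
    (t % 4 = 2 →
      powerDominationNumber (tensorProd (cycleGraph t) (⊤ : SimpleGraph (Fin n))) ≤ t / 2 + 1) := by
  exact ⟨fun h => cyc_main n t hn ht _ le_rfl (fun h' => absurd h' h),
    fun h => cyc_main n t hn ht _ (by omega) (fun _ => le_rfl)⟩

end PaperPD
end

section
/- Let t ≥ 2. Suppose either t is odd and n ≥ t, or t is even and n ≥ t/2 + 2. Then γ_P(P_t × K_n) = ⌈t/2⌉ if t ≢ 2 (mod 4), while if t ≡ 2 (mod 4) then γ_P(P_t × K_n) equals t/2 or t/2 + 1. -/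
namespace PaperPD

open SimpleGraph

variable {V α β : Type*}

theorem fort_aux (G : SimpleGraph V) (B W : Set V) (hd : ∀ v ∈ B, v ∉ W)
    (hf : ∀ u w, w ∈ W → G.Adj u w → ∃ x ∈ W, G.Adj u x ∧ x ≠ w) (v : V)
    (hv : ZFClosure G B v) : v ∉ W := by
  induction hv with
  | init v hv => exact hd v hv
  | force u w hu huw h ihu ih =>
    intro hw
    obtain ⟨x, hx, hux, hne⟩ := hf u w hw huw
    exact ih x hux hne hx

theorem adj_iff (t n : ℕ) (p q : Fin t × Fin n) :
    (tensorProd (pathGraph t) (⊤ : SimpleGraph (Fin n))).Adj p q ↔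
      (p.1.val + 1 = q.1.val ∨ q.1.val + 1 = p.1.val) ∧ p.2 ≠ q.2 := by
  simp [tensorProd, pathGraph_adj]

theorem lower (t n : ℕ) (ht : 2 ≤ t)
    (h : (Odd t ∧ t ≤ n) ∨ (Even t ∧ t / 2 + 2 ≤ n)) (S : Finset (Fin t × Fin n))
    (hS : IsPowerDominatingSet (tensorProd (pathGraph t) (⊤ : SimpleGraph (Fin n))) ↑S) :
    t ≤ 2 * S.card := by
  classical
  by_contra hlt
  push Not at hlt
  -- there is an untouched layer
  have hex : ∃ i : Fin t, ∀ p ∈ S, ¬ (p.1.val + 1 = i.val ∨ i.val + 1 = p.1.val) := by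
    by_contra hno
    push Not at hno
    have hsub : Finset.range t ⊆ S.image (fun p => p.1.val + 1) ∪ S.image (fun p => p.1.val - 1) := by
      intro i hi
      obtain ⟨p, hp, hh⟩ := hno ⟨i, Finset.mem_range.1 hi⟩
      simp only [Finset.mem_union, Finset.mem_image]
      rcases hh with hh | hh
      · exact Or.inl ⟨p, hp, hh⟩
      · exact Or.inr ⟨p, hp, by simp at hh; omega⟩
    have h1 := Finset.card_le_card hsub
    have h2 := Finset.card_union_le (S.image (fun p => p.1.val + 1)) (S.image (fun p => p.1.val - 1))
    have h3 : (S.image (fun p => p.1.val + 1)).card ≤ S.card := Finset.card_image_le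
    have h4 : (S.image (fun p => p.1.val - 1)).card ≤ S.card := Finset.card_image_le
    rw [Finset.card_range] at h1
    omega
  -- an untouched layer with few elements of S gives a fort
  have key : ∀ i : Fin t, (∀ p ∈ S, ¬ (p.1.val + 1 = i.val ∨ i.val + 1 = p.1.val)) →
      ∀ T : Finset (Fin n), (∀ b, (i, b) ∈ S → b ∈ T) → T.card + 3 ≤ n → False := by
    intro i hi T hT hc
    have hcard : ∀ a b : Fin n, ∃ x, x ∉ T ∧ x ≠ a ∧ x ≠ b := by
      intro a b
      by_contra hno
      push Not at hno
      have hsub : (Finset.univ : Finset (Fin n)) ⊆ T ∪ {a, b} := by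
        intro x _
        by_cases hx : x ∈ T
        · simp [hx]
        · by_cases hxa : x = a
          · simp [hxa]
          · simp [hno x hx hxa]
      have h1 := Finset.card_le_card hsub
      have h2 := Finset.card_union_le T {a, b}
      have h3 : ({a, b} : Finset (Fin n)).card ≤ 2 := Finset.card_le_two
      rw [Finset.card_univ, Fintype.card_fin] at h1
      omega
    have hn : 0 < n := by omega
    obtain ⟨x, hx, -, -⟩ := hcard ⟨0, hn⟩ ⟨0, hn⟩
    refine fort_aux _ _ {p : Fin t × Fin n | p.1 = i ∧ p.2 ∉ T} ?_ ?_ (i, x) (hS (i, x)) ⟨rfl, hx⟩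
    · rintro ⟨j, b⟩ hv ⟨h1, h2⟩
      simp only at h1 h2
      subst h1
      rcases hv with hv | ⟨u, hu, huv⟩
      · exact h2 (hT b hv)
      · rw [adj_iff] at huv
        exact hi u hu huv.1
    · rintro u ⟨j, b⟩ ⟨h1, h2⟩ huw
      simp only at h1 h2
      subst h1
      rw [adj_iff] at huw
      obtain ⟨y, hy, hya, hyb⟩ := hcard u.2 b
      refine ⟨(j, y), ⟨rfl, hy⟩, ?_, ?_⟩
      · rw [adj_iff]
        exact ⟨huw.1, hya.symm⟩
      · simpa using hyb
  obtain ⟨i, hi⟩ := hex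
  by_cases hbig : S.card + 3 ≤ n
  · refine key i hi (S.image Prod.snd) ?_ ?_
    · intro b hb
      exact Finset.mem_image.2 ⟨_, hb, rfl⟩
    · have : (S.image Prod.snd).card ≤ S.card := Finset.card_image_le
      omega
  · -- t = 3, n = 3, |S| = 1
    have ht3 : t = 3 ∧ n = 3 ∧ S.card = 1 := by
      rcases h with ⟨⟨m, hm⟩, hn⟩ | ⟨⟨m, hm⟩, hn⟩ <;> omega
    obtain ⟨rfl, rfl, hc⟩ := ht3
    obtain ⟨⟨j, a⟩, rfl⟩ := Finset.card_eq_one.1 hc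
    by_cases hj : j = 1
    · subst hj
      refine fort_aux _ _ {p : Fin 3 × Fin 3 | p.1 ≠ 1 ∧ p.2 = a} ?_ ?_ (0, a) (hS (0, a))
        ⟨(by decide : (0 : Fin 3) ≠ 1), rfl⟩
      · rintro ⟨k, b⟩ hv ⟨h1, h2⟩
        simp only at h1 h2
        subst h2
        rcases hv with hv | ⟨u, hu, huv⟩
        · simp at hv
          exact h1 hv
        · rw [adj_iff] at huv
          simp at hu
          subst hu
          exact huv.2 rfl
      · rintro ⟨c, d⟩ ⟨k, b⟩ ⟨h1, h2⟩ huw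
        simp only at h1 h2
        subst h2
        rw [adj_iff] at huw
        obtain ⟨h3, h4⟩ := huw
        refine ⟨(2 - k, b), ⟨?_, rfl⟩, ?_, ?_⟩
        · exact (by decide : ∀ k : Fin 3, k ≠ 1 → 2 - k ≠ 1) k h1
        · rw [adj_iff]
          refine ⟨?_, h4⟩
          simp only at h3 ⊢
          clear h4
          revert h3 h1; revert c k; decide
        · simp only [ne_eq, Prod.mk.injEq, and_true]
          exact (by decide : ∀ k : Fin 3, k ≠ 1 → 2 - k ≠ k) k h1
    · refine key (2 - j) ?_ ∅ ?_ (by simp)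
      · intro p hp
        simp at hp
        subst hp
        simp only
        exact (by decide : ∀ j : Fin 3, j ≠ 1 → ¬ (j.val + 1 = (2 - j).val ∨ (2 - j).val + 1 = j.val)) j hj
      · intro b hb
        simp at hb
        exfalso
        exact (by decide : ∀ j : Fin 3, j ≠ 1 → 2 - j ≠ j) j hj hb.1

theorem upper (t n m : ℕ) (ht : 2 ≤ t) (hn : 2 ≤ n)
    (hm : m = if t % 4 = 2 then t / 2 + 1 else (t + 1) / 2) :
    ∃ S : Finset (Fin t × Fin n), S.card ≤ m ∧
      IsPowerDominatingSet (tensorProd (pathGraph t) (⊤ : SimpleGraph (Fin n))) ↑S := by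
  classical
  let f : ℕ → ℕ := fun j => if 4 * (j / 2) + 1 + j % 2 < t then 4 * (j / 2) + 1 + j % 2 else t - 2
  have hf : ∀ j, f j < t := by intro j; simp only [f]; split_ifs <;> omega
  let z : Fin n := ⟨0, by omega⟩
  let o : Fin n := ⟨1, by omega⟩
  have hzo : o ≠ z := by simp [z, o]
  let S : Finset (Fin t × Fin n) := (Finset.range m).image fun j => (⟨f j, hf j⟩, z)
  have hS : ∀ i : Fin t, (i.val % 4 = 1 ∨ i.val % 4 = 2 ∨ ((t % 4 = 1 ∨ t % 4 = 2) ∧ i.val + 2 = t)) →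
      (i, z) ∈ S := by
    intro i hi
    have hit := i.isLt
    have : ∃ j, j < m ∧ f j = i.val := by
      rcases hi with hi | hi | ⟨hi, hi2⟩
      · refine ⟨2 * (i.val / 4), ?_, ?_⟩
        · split_ifs at hm <;> omega
        · simp only [f]; split_ifs <;> omega
      · refine ⟨2 * (i.val / 4) + 1, ?_, ?_⟩
        · split_ifs at hm <;> omega
        · simp only [f]; split_ifs <;> omega
      · by_cases h1 : t % 4 = 1
        · refine ⟨t / 2, ?_, ?_⟩
          · split_ifs at hm <;> omega
          · simp only [f]; split_ifs <;> omega
        · refine ⟨t / 2, ?_, ?_⟩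
          · split_ifs at hm <;> omega
          · simp only [f]; split_ifs <;> omega
    obtain ⟨j, hj, hji⟩ := this
    refine Finset.mem_image.2 ⟨j, Finset.mem_range.2 hj, ?_⟩
    simp [hji]
  refine ⟨S, ?_, ?_⟩
  · exact Finset.card_image_le.trans (by simp)
  · have hdom : ∀ (i : Fin t) (b : Fin n), b ≠ z →
        ZFClosure (tensorProd (pathGraph t) (⊤ : SimpleGraph (Fin n))) (closedNbhd (tensorProd (pathGraph t) (⊤ : SimpleGraph (Fin n))) ↑S) (i, b) := by
      intro i b hb
      have hit := i.isLt
      apply ZFClosure.init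
      right
      have : ∃ j : Fin t, (j.val + 1 = i.val ∨ i.val + 1 = j.val) ∧
          (j.val % 4 = 1 ∨ j.val % 4 = 2 ∨ ((t % 4 = 1 ∨ t % 4 = 2) ∧ j.val + 2 = t)) := by
        by_cases h1 : (i.val % 4 = 0 ∨ i.val % 4 = 1) ∧ i.val + 1 < t
        · exact ⟨⟨i.val + 1, h1.2⟩, Or.inr rfl, by simp only; omega⟩
        · exact ⟨⟨i.val - 1, by omega⟩, by simp only; omega, by simp only; omega⟩
      obtain ⟨j, h1, h2⟩ := this
      refine ⟨(j, z), hS j h2, ?_⟩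
      rw [adj_iff]
      exact ⟨h1, hb.symm⟩
    rintro ⟨i, b⟩
    by_cases hb : b = z
    swap
    · exact hdom i b hb
    subst hb
    have hit := i.isLt
    by_cases hi : (i.val % 4 = 1 ∨ i.val % 4 = 2 ∨ ((t % 4 = 1 ∨ t % 4 = 2) ∧ i.val + 2 = t))
    · exact ZFClosure.init _ (Or.inl (hS i hi))
    have : ∃ j : Fin t, (j.val + 1 = i.val ∨ i.val + 1 = j.val) ∧ ∀ k : Fin t,
        (j.val + 1 = k.val ∨ k.val + 1 = j.val) → k ≠ i →
          (k.val % 4 = 1 ∨ k.val % 4 = 2 ∨ ((t % 4 = 1 ∨ t % 4 = 2) ∧ k.val + 2 = t)) := by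
      by_cases h1 : i.val % 4 = 0 ∧ i.val + 1 < t
      · refine ⟨⟨i.val + 1, h1.2⟩, Or.inr rfl, ?_⟩
        intro k hk hki
        rw [Ne, Fin.ext_iff] at hki
        simp only at hk
        omega
      · refine ⟨⟨i.val - 1, by omega⟩, by simp only; omega, ?_⟩
        intro k hk hki
        rw [Ne, Fin.ext_iff] at hki
        simp only at hk
        omega
    obtain ⟨j, hj, hk⟩ := this
    refine ZFClosure.force (j, o) (i, z) (hdom j o hzo) ?_ ?_
    · rw [adj_iff]
      exact ⟨hj, hzo⟩
    · rintro ⟨k, c⟩ hadj hne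
      rw [adj_iff] at hadj
      by_cases hc : c = z
      · subst hc
        have hki : k ≠ i := by
          rintro rfl
          exact hne rfl
        exact ZFClosure.init _ (Or.inl (hS k (hk k hadj.1 hki)))
      · exact hdom k c hc

/-- Let `t ≥ 2` and suppose `t` is odd with `n ≥ t`, or `t` is even
with `n ≥ t/2 + 2`. Then `γ_P(P_t × K_n) = ⌈t/2⌉` if `t ≢ 2 (mod 4)`, and
`γ_P(P_t × K_n) ∈ {t/2, t/2 + 1}` if `t ≡ 2 (mod 4)`. -/
theorem stmt13 (t n : ℕ) (ht : 2 ≤ t)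
    (h : (Odd t ∧ t ≤ n) ∨ (Even t ∧ t / 2 + 2 ≤ n)) :
    (t % 4 ≠ 2 →
      powerDominationNumber (tensorProd (pathGraph t) (⊤ : SimpleGraph (Fin n))) = (t + 1) / 2) ∧
    (t % 4 = 2 →
      powerDominationNumber (tensorProd (pathGraph t) (⊤ : SimpleGraph (Fin n))) = t / 2 ∨
      powerDominationNumber (tensorProd (pathGraph t) (⊤ : SimpleGraph (Fin n))) = t / 2 + 1) := by
  have hn : 2 ≤ n := by rcases h with ⟨_, h⟩ | ⟨_, h⟩ <;> omega
  obtain ⟨S, hSc, hS⟩ := upper t n _ ht hn rfl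
  have hup : powerDominationNumber (tensorProd (pathGraph t) (⊤ : SimpleGraph (Fin n))) ≤ S.card :=
    Nat.sInf_le ⟨S, rfl, hS⟩
  obtain ⟨S', hc', hS'⟩ := Nat.sInf_mem (s := {k | ∃ S : Finset (Fin t × Fin n), S.card = k ∧
    IsPowerDominatingSet (tensorProd (pathGraph t) (⊤ : SimpleGraph (Fin n))) ↑S}) ⟨_, S, rfl, hS⟩
  have hlow := lower t n ht h S' hS'
  have hlow' : t ≤ 2 * powerDominationNumber (tensorProd (pathGraph t) (⊤ : SimpleGraph (Fin n))) := by
    rw [hc'] at hlow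
    exact hlow
  constructor
  · intro h2
    rw [if_neg h2] at hSc
    omega
  · intro h2
    rw [if_pos h2] at hSc
    omega

end PaperPD
end
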